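/- arXiv:2002.02067 — 11 statements merged into one kernel-verified Lean document; each statement's English description precedes it below -/
import Mathlib

section
/- Let n be a positive integer and let σ be a permutation of Fin n. Let T be the 𝔽₂-linear endomorphism of V = (Fin n → 𝔽₂) sending v to v ∘ σ⁻¹, and let W₁ = {v ∈ V : ∑ᵢ v(i) = 0}, which is a T-invariant subspace. Then the characteristic polynomial of the restriction of T to W₁ equals the unique polynomial h ∈ 𝔽₂[X] satisfying (X − 1) · h = ∏_o (X^{|o|} − 1), where the product runs over the orbits o of σ on Fin n and |o| denotes the cardinality of the orbit. -/
/-!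
The coordinate sum is a surjective functional fixed by `v ↦ v ∘ σ`, so the endomorphism induced on
the quotient by the sum-zero vectors is the identity of a line, and
`χ(V) = χ(W₁) * (X - 1)`. On the other hand the matrix of a permutation is block diagonal along its
orbits. On an orbit with `d` elements the indicator of a point is a cyclic vector annihilated by
`X ^ d - 1`, so this monic polynomial of degree `d` is the characteristic polynomial of the block.
-/

open Polynomial

/-- The orbits of a permutation `σ` of `Fin n`, as a finset of finsets. -/
def permOrbits {n : ℕ} (σ : Equiv.Perm (Fin n)) : Finset (Finset (Fin n)) :=
  Finset.univ.image fun i => Finset.univ.filter fun j => σ.SameCycle i j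

/-- The 𝔽₂-linear endomorphism of `Fin n → 𝔽₂` sending `v` to `v ∘ σ⁻¹`. -/
def permT {n : ℕ} (σ : Equiv.Perm (Fin n)) :
    (Fin n → ZMod 2) →ₗ[ZMod 2] (Fin n → ZMod 2) :=
  LinearMap.funLeft (ZMod 2) (ZMod 2) ⇑σ⁻¹

/-- The subspace `W₁` of vectors in `Fin n → 𝔽₂` whose coordinates sum to zero. -/
def evenWeight (n : ℕ) : Submodule (ZMod 2) (Fin n → ZMod 2) where
  carrier := {v | ∑ i, v i = 0}
  add_mem' := by
    intro a b ha hb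
    simp only [Set.mem_setOf_eq, Pi.add_apply, Finset.sum_add_distrib] at *
    rw [ha, hb, add_zero]
  zero_mem' := by simp
  smul_mem' := by
    intro c v hv
    simp only [Set.mem_setOf_eq, Pi.smul_apply, smul_eq_mul, ← Finset.mul_sum] at *
    rw [hv, mul_zero]

/-- `W₁` is invariant under `T`. -/
theorem evenWeight_invariant {n : ℕ} (σ : Equiv.Perm (Fin n)) :
    ∀ v ∈ evenWeight n, permT σ v ∈ evenWeight n := by
  intro v hv
  have : ∑ i, v (σ⁻¹ i) = ∑ i, v i := Equiv.sum_comp σ⁻¹ v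
  simpa only [evenWeight, permT, LinearMap.funLeft_apply, Submodule.mem_mk,
    AddSubmonoid.mem_mk, AddSubsemigroup.mem_mk, Set.mem_setOf_eq, Function.comp,
    this] using hv

section CyclicVector

variable {R M : Type*} [CommRing R] [AddCommGroup M] [Module R M]

theorem eq_zero_of_aeval_apply_eq_zero {f : Module.End R M} {v : M} {d : ℕ}
    (hv : LinearIndependent R fun k : Fin d ↦ (f ^ (k : ℕ)) v) {p : R[X]}
    (hdeg : p.degree < d) (hp : aeval f p v = 0) : p = 0 := by
  obtain rfl | hne := eq_or_ne p 0
  · rfl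
  have hd : p.natDegree < d := (natDegree_lt_iff_degree_lt hne).2 hdeg
  have hsum : ∑ k : Fin d, p.coeff k • (f ^ (k : ℕ)) v = 0 := by
    rw [Fin.sum_univ_eq_sum_range fun k ↦ p.coeff k • (f ^ k) v, ← hp, aeval_endomorphism,
      p.sum_over_range' (f := fun k c ↦ c • (f ^ k) v) (fun _ ↦ zero_smul R _) d hd]
  ext k
  by_cases hk : k < d
  · exact Fintype.linearIndependent_iff.1 hv _ hsum ⟨k, hk⟩
  · exact coeff_eq_zero_of_degree_lt (hdeg.trans_le (by exact_mod_cast not_lt.1 hk))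

theorem charpoly_eq_of_aeval_apply_eq_zero [Module.Free R M] [Module.Finite R M]
    {f : Module.End R M} {v : M}
    (hv : LinearIndependent R fun k : Fin (Module.finrank R M) ↦ (f ^ (k : ℕ)) v) {p : R[X]}
    (hmonic : p.Monic) (hdeg : p.natDegree = Module.finrank R M) (hp : aeval f p v = 0) :
    f.charpoly = p := by
  nontriviality R
  have hdegree : f.charpoly.degree = p.degree := by
    rw [degree_eq_natDegree f.charpoly_monic.ne_zero, degree_eq_natDegree hmonic.ne_zero,
      f.charpoly_natDegree, hdeg]
  have hlt : (f.charpoly - p).degree < Module.finrank R M := by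
    rw [← f.charpoly_natDegree, ← degree_eq_natDegree f.charpoly_monic.ne_zero]
    exact degree_sub_lt_left hdegree f.charpoly_monic.ne_zero
      (f.charpoly_monic.leadingCoeff.trans hmonic.leadingCoeff.symm)
  refine sub_eq_zero.1 (eq_zero_of_aeval_apply_eq_zero hv hlt ?_)
  rw [map_sub, f.aeval_self_charpoly, zero_sub, LinearMap.neg_apply, hp, neg_zero]

end CyclicVector

section InvariantSubmodule

theorem ker_le_comap_ker {R M N : Type*} [Semiring R] [AddCommMonoid M] [Module R M]
    [AddCommMonoid N] [Module R N] {g : M →ₗ[R] N} {f : Module.End R M}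
    {f' : Module.End R N} (hf : g ∘ₗ f = f' ∘ₗ g) :
    LinearMap.ker g ≤ (LinearMap.ker g).comap f := by
  intro x hx
  rw [Submodule.mem_comap, LinearMap.mem_ker, ← LinearMap.comp_apply, hf, LinearMap.comp_apply,
    LinearMap.mem_ker.1 hx, map_zero]

variable {R M N : Type*} [CommRing R] [AddCommGroup M] [Module R M] [Module.Free R M]
  [Module.Finite R M] [AddCommGroup N] [Module R N]

theorem charpoly_eq_charpoly_restrict_mul_charpoly_mapQ (W : Submodule R M) [Module.Free R W]
    [Module.Finite R W] [Module.Free R (M ⧸ W)] (f : Module.End R M) (hf : W ≤ W.comap f) :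
    f.charpoly = (f.restrict hf).charpoly * (W.mapQ W f hf).charpoly := by
  let bW := Module.Free.chooseBasis R W
  let bQ := Module.Free.chooseBasis R (M ⧸ W)
  let b := bW.sumQuot bQ
  let A := LinearMap.toMatrix b b f
  have h₁₁ : A.toBlocks₁₁ = LinearMap.toMatrix bW bW (f.restrict hf) := by
    ext i j
    simp only [A, b, Matrix.toBlocks₁₁, Matrix.of_apply, LinearMap.toMatrix_apply,
      Module.Basis.sumQuot_inl]
    exact Module.Basis.sumQuot_repr_inl_of_mem bW bQ _ (hf (bW j).2) i
  have h₂₁ : A.toBlocks₂₁ = 0 := by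
    ext i j
    have hmem : f (bW j) ∈ W := hf (bW j).2
    simp [A, b, Matrix.toBlocks₂₁, LinearMap.toMatrix_apply,
      (Submodule.Quotient.mk_eq_zero W).2 hmem]
  have h₂₂ : A.toBlocks₂₂ = LinearMap.toMatrix bQ bQ (W.mapQ W f hf) := by
    ext i j
    rw [LinearMap.toMatrix_apply, ← Module.Basis.sumQuot_inr bW bQ j, W.mapQ_apply]
    simp [A, b, Matrix.toBlocks₂₂, LinearMap.toMatrix_apply]
  rw [← f.charpoly_toMatrix b, ← Matrix.fromBlocks_toBlocks (LinearMap.toMatrix b b f), h₁₁, h₂₁,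
    h₂₂, Matrix.charpoly_fromBlocks_zero₂₁, LinearMap.charpoly_toMatrix,
    LinearMap.charpoly_toMatrix]

theorem charpoly_eq_charpoly_restrict_ker_mul [Module.Free R N] [Module.Finite R N]
    {g : M →ₗ[R] N} (hg : Function.Surjective g) [Module.Free R (LinearMap.ker g)]
    [Module.Finite R (LinearMap.ker g)] {f : Module.End R M} {f' : Module.End R N}
    (hf : g ∘ₗ f = f' ∘ₗ g) :
    f.charpoly = (f.restrict (ker_le_comap_ker hf)).charpoly * f'.charpoly := by
  have hker := ker_le_comap_ker hf
  let e := g.quotKerEquivOfSurjective hg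
  have : Module.Free R (M ⧸ LinearMap.ker g) := .of_equiv e.symm
  have hconj : e.conj ((LinearMap.ker g).mapQ (LinearMap.ker g) f hker) = f' := by
    refine LinearMap.ext fun y ↦ ?_
    obtain ⟨x, rfl⟩ := hg y
    have hx : e.symm (g x) = Submodule.Quotient.mk x := e.symm_apply_eq.2 rfl
    rw [LinearEquiv.conj_apply_apply, hx]
    exact LinearMap.congr_fun hf x
  rw [charpoly_eq_charpoly_restrict_mul_charpoly_mapQ _ f hker,
    ← e.charpoly_conj (Submodule.mapQ _ _ f hker), hconj]

end InvariantSubmodule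

theorem charpoly_eq_prod_charpoly_toSquareBlock {R n α : Type*} [CommRing R] [Fintype n]
    [DecidableEq n] [DecidableEq α] {A : Matrix n n R} {b : n → α}
    (hA : ∀ i j, b i ≠ b j → A i j = 0) :
    A.charpoly = ∏ a ∈ Finset.univ.image b, (A.toSquareBlock b a).charpoly := by
  classical
  let _ : LinearOrder α := linearOrderOfSTO WellOrderingRel
  have hblock : A.BlockTriangular b := fun i j hij ↦ hA i j hij.ne'
  convert hblock.charpoly

section Permutation

theorem funLeft_pow {R M ι : Type*} [Semiring R] [AddCommMonoid M] [Module R M]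
    (σ : Equiv.Perm ι) (k : ℕ) :
    (LinearMap.funLeft R M σ ^ k : Module.End R (ι → M)) = LinearMap.funLeft R M ⇑(σ ^ k) := by
  induction k with
  | zero => rfl
  | succ k ih => rw [pow_succ, ih, pow_succ']; rfl

theorem funLeft_single {R M ι : Type*} [Semiring R] [AddCommMonoid M] [Module R M]
    [DecidableEq ι] (σ : Equiv.Perm ι) (i : ι) (x : M) :
    LinearMap.funLeft R M σ (Pi.single i x) = Pi.single (σ⁻¹ i) x := by
  ext j
  simp only [LinearMap.funLeft_apply, Pi.single_apply, Equiv.Perm.eq_inv_iff_eq]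

theorem toSquareBlock_permMatrix {R ι α : Type*} [Zero R] [One R] [DecidableEq ι]
    (σ : Equiv.Perm ι) {b : ι → α} (hb : ∀ i, b (σ i) = b i) (a : α) :
    (σ.permMatrix R).toSquareBlock b a =
      (σ.subtypePerm (p := fun i ↦ b i = a) fun i ↦ by rw [hb i]).permMatrix R := by
  ext i j
  simp [Matrix.toSquareBlock_def, Subtype.ext_iff, PEquiv.toMatrix_apply]

variable {R ι : Type*} [CommRing R] [Fintype ι] [DecidableEq ι]

theorem toLin'_permMatrix (σ : Equiv.Perm ι) :
    Matrix.toLin' (σ.permMatrix R) = LinearMap.funLeft R R σ := by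
  refine LinearMap.ext fun v ↦ ?_
  rw [Matrix.toLin'_apply, Matrix.permMatrix_mulVec]
  rfl

theorem linearIndependent_funLeft_pow_single {σ : Equiv.Perm ι} (hσ : σ.IsCycleOn Set.univ)
    (i : ι) :
    LinearIndependent R fun k : Fin (Fintype.card ι) ↦
      (LinearMap.funLeft R R σ ^ (k : ℕ) : Module.End R (ι → R)) (Pi.single i 1) := by
  have hinv : σ⁻¹.IsCycleOn (Finset.univ : Finset ι) := by
    rwa [Finset.coe_univ, Equiv.Perm.isCycleOn_inv]
  have hinj : Function.Injective fun k : Fin (Fintype.card ι) ↦ (σ⁻¹ ^ (k : ℕ)) i := by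
    intro k l hkl
    have hmod := (hinv.pow_apply_eq_pow_apply (Finset.mem_univ i)).1 hkl
    exact Fin.ext (hmod.eq_of_lt_of_lt k.2 l.2)
  convert (Pi.basisFun R ι).linearIndependent.comp _ hinj using 2 with k
  rw [funLeft_pow, funLeft_single, Function.comp_apply, Pi.basisFun_apply, inv_pow]

theorem charpoly_funLeft_of_isCycleOn_univ {R ι : Type*} [CommRing R] [Fintype ι] [Nonempty ι]
    {σ : Equiv.Perm ι} (hσ : σ.IsCycleOn Set.univ) :
    (LinearMap.funLeft R R σ).charpoly = X ^ Fintype.card ι - 1 := by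
  classical
  nontriviality R
  obtain ⟨i⟩ := ‹Nonempty ι›
  have hpow : σ ^ Fintype.card ι = 1 := by
    rw [← Finset.coe_univ] at hσ
    exact Equiv.ext fun j ↦ hσ.pow_card_apply (Finset.mem_univ j)
  have hrank : Module.finrank R (ι → R) = Fintype.card ι := Module.finrank_fintype_fun_eq_card R
  refine charpoly_eq_of_aeval_apply_eq_zero (v := Pi.single i 1) ?_ ?_ ?_ ?_
  · rw [hrank]
    exact linearIndependent_funLeft_pow_single hσ i
  · exact monic_X_pow_sub_C 1 Fintype.card_ne_zero
  · rw [hrank]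
    exact natDegree_X_pow_sub_C (r := (1 : R))
  · rw [map_sub, map_pow, aeval_X, map_one, funLeft_pow, hpow]
    exact sub_self _

theorem filter_sameCycle_eq_iff (σ : Equiv.Perm ι) (i j : ι) :
    ({k | σ.SameCycle i k} : Finset ι) = ({k | σ.SameCycle j k} : Finset ι) ↔
      σ.SameCycle i j := by
  constructor
  · intro h
    have hj : j ∈ ({k | σ.SameCycle j k} : Finset ι) := by simp [Equiv.Perm.SameCycle.refl]
    simpa [← h] using hj
  · intro h
    ext k
    simpa using ⟨h.symm.trans, h.trans⟩

theorem charpoly_funLeft (σ : Equiv.Perm ι) :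
    (LinearMap.funLeft R R σ).charpoly =
      ∏ o ∈ Finset.univ.image fun i ↦ ({j | σ.SameCycle i j} : Finset ι),
        ((X : R[X]) ^ o.card - 1) := by
  let b : ι → Finset ι := fun i ↦ {j | σ.SameCycle i j}
  have hb : ∀ i j, b i = b j ↔ σ.SameCycle i j := filter_sameCycle_eq_iff σ
  have hσb : ∀ i, b (σ i) = b i := fun i ↦
    (hb _ _).2 (Equiv.Perm.sameCycle_apply_left.2 (.refl σ i))
  have hblock : ∀ i j, b i ≠ b j → σ.permMatrix R i j = 0 := by
    intro i j hij
    have hne : σ i ≠ j := fun h ↦ hij (by rw [← h, hσb])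
    simp [PEquiv.toMatrix_apply, hne]
  rw [← toLin'_permMatrix, Matrix.charpoly_toLin',
    charpoly_eq_prod_charpoly_toSquareBlock hblock]
  refine Finset.prod_congr rfl (Finset.forall_mem_image.2 fun i _ ↦ ?_)
  have : Nonempty {j // b j = b i} := ⟨i, rfl⟩
  have hcard : Fintype.card {j // b j = b i} = (b i).card :=
    Fintype.card_of_subtype _ fun j ↦ by simp [b, hb, Equiv.Perm.sameCycle_comm]
  have hcycle : (σ.subtypePerm (p := fun j ↦ b j = b i) fun j ↦ by rw [hσb j]).IsCycleOn
      Set.univ := by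
    refine ⟨Set.bijOn_univ.2 (Equiv.bijective _), fun j _ k _ ↦ ?_⟩
    rw [Equiv.Perm.sameCycle_subtypePerm, ← hb, j.2, k.2]
  rw [toSquareBlock_permMatrix σ hσb, ← Matrix.charpoly_toLin', toLin'_permMatrix,
    charpoly_funLeft_of_isCycleOn_univ hcycle, hcard]

end Permutation

section CoordinateSum

/-- The sum of the coordinates as a linear functional. Its kernel generalizes `evenWeight`. -/
def coordSum (R ι : Type*) [Semiring R] [Fintype ι] : (ι → R) →ₗ[R] R where
  toFun v := ∑ i, v i
  map_add' _ _ := Finset.sum_add_distrib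
  map_smul' _ _ := (Finset.mul_sum ..).symm

theorem coordSum_comp_funLeft {R ι : Type*} [Semiring R] [Fintype ι] (σ : Equiv.Perm ι) :
    coordSum R ι ∘ₗ LinearMap.funLeft R R σ = LinearMap.id ∘ₗ coordSum R ι :=
  LinearMap.ext fun v ↦ Equiv.sum_comp σ v

theorem coordSum_surjective {R ι : Type*} [Semiring R] [Fintype ι] [Nonempty ι] :
    Function.Surjective (coordSum R ι) := by
  obtain ⟨i⟩ := ‹Nonempty ι›
  classical
  exact fun c ↦ ⟨Pi.single i c, Fintype.sum_pi_single' i c⟩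

variable {R ι : Type*} [Ring R] [Fintype ι]

theorem bijective_funLeft_domRestrict_ker_coordSum (i₀ : ι) :
    Function.Bijective ((LinearMap.funLeft R R (Subtype.val : {i // i ≠ i₀} → ι)).domRestrict
      (LinearMap.ker (coordSum R ι))) := by
  classical
  constructor
  · refine (injective_iff_map_eq_zero _).2 fun ⟨v, hv⟩ hv₀ ↦ Subtype.ext (funext fun i ↦ ?_)
    have hne : ∀ i : {i // i ≠ i₀}, v i = 0 := congrFun hv₀
    obtain rfl | hi := eq_or_ne i i₀
    · have hsum : ∑ j, v j = 0 := hv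
      rwa [Fintype.sum_eq_add_sum_subtype_ne v i, Finset.sum_eq_zero fun j _ ↦ hne j,
        add_zero] at hsum
    · exact hne ⟨i, hi⟩
  · intro w
    let v : ι → R := fun i ↦ if hi : i ≠ i₀ then w ⟨i, hi⟩ else -∑ j, w j
    have hne : ∀ i : {i // i ≠ i₀}, v i = w i := fun i ↦ dif_pos i.2
    have hv : ∑ i, v i = 0 := by
      rw [Fintype.sum_eq_add_sum_subtype_ne v i₀, Fintype.sum_congr _ _ hne]
      simp [v]
    exact ⟨⟨v, hv⟩, funext hne⟩

instance free_ker_coordSum [Nonempty ι] : Module.Free R (LinearMap.ker (coordSum R ι)) := by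
  obtain ⟨i⟩ := ‹Nonempty ι›
  exact .of_equiv (LinearEquiv.ofBijective _ (bijective_funLeft_domRestrict_ker_coordSum i)).symm

instance finite_ker_coordSum [Nonempty ι] : Module.Finite R (LinearMap.ker (coordSum R ι)) := by
  obtain ⟨i⟩ := ‹Nonempty ι›
  exact .equiv (LinearEquiv.ofBijective _ (bijective_funLeft_domRestrict_ker_coordSum i)).symm

end CoordinateSum

theorem charpoly_restrict_evenWeight_general {R ι : Type*} [CommRing R] [Fintype ι]
    [DecidableEq ι] [Nonempty ι] (σ : Equiv.Perm ι) :
    ((X : R[X]) - 1) *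
        ((LinearMap.funLeft R R ⇑σ⁻¹).restrict
          (ker_le_comap_ker (coordSum_comp_funLeft σ⁻¹))).charpoly =
      ∏ o ∈ Finset.univ.image fun i ↦ ({j | σ.SameCycle i j} : Finset ι),
        ((X : R[X]) ^ o.card - 1) := by
  nontriviality R
  have hid : (LinearMap.id : Module.End R R).charpoly = X - 1 := by
    rw [← Module.End.one_eq_id, LinearMap.charpoly_one, Module.finrank_self, pow_one]
  rw [mul_comm, ← hid,
    ← charpoly_eq_charpoly_restrict_ker_mul coordSum_surjective (coordSum_comp_funLeft σ⁻¹),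
    charpoly_funLeft]
  simp only [Equiv.Perm.sameCycle_inv]

/-- The characteristic polynomial of the restriction of `v ↦ v ∘ σ⁻¹` to the subspace of
vectors with coordinate sum zero is the unique `h` with `(X − 1) ⬝ h = ∏_o (X^|o| − 1)`,
the product running over the orbits of `σ` on `Fin n`. -/
theorem charpoly_restrict_evenWeight (n : ℕ) (hn : 0 < n) (σ : Equiv.Perm (Fin n)) :
    ((X : (ZMod 2)[X]) - 1) *
        ((permT σ).restrict (evenWeight_invariant σ)).charpoly =
      ∏ o ∈ permOrbits σ, ((X : (ZMod 2)[X]) ^ o.card - 1) := by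
  have := Fin.pos_iff_nonempty.1 hn
  exact charpoly_restrict_evenWeight_general σ
end

section
/- For every multiset D of positive integers with sum 8, the product ∏_{d ∈ D} (X^d − 1) ∈ 𝔽₂[X] is divisible by (X − 1)², and the unique polynomial h ∈ 𝔽₂[X] with (X − 1)² · h = ∏_{d ∈ D} (X^d − 1) satisfies: it is not the case that the coefficient of X⁴ in h is 0 and the coefficient of X³ in h is 1. -/
open Polynomial

/-!
In characteristic `2` we have `X ^ (2 ^ k * m) - 1 = (X ^ m - 1) ^ (2 ^ k)`, so replacing each part
`2 ^ k * m` with `m` odd by `2 ^ k` copies of `m` changes neither the sum nor the product. Hence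
only the six partitions of `8` into odd parts matter. Their quotients by `(X - 1) ^ 2` realise six
of the eight palindromic patterns `(a₁, a₂, a₃)`; the missing ones are `(0, 0, 1)` and `(1, 0, 1)`.
-/

/-- Glaisher's map on multisets of parts: each part `p ^ k * m` with `p ∤ m` is split into `p ^ k`
copies of `m`. A zero part is left unchanged. It is used to reduce to partitions into odd parts. -/
def glaisher (p : ℕ) (D : Multiset ℕ) : Multiset ℕ :=
  D.bind fun d => Multiset.replicate (ordProj[p] d) (ordCompl[p] d)

theorem sum_glaisher (p : ℕ) (D : Multiset ℕ) : (glaisher p D).sum = D.sum := by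
  simp only [glaisher, Multiset.sum_bind, Multiset.sum_replicate, smul_eq_mul,
    Nat.ordProj_mul_ordCompl_eq_self, Multiset.map_id']

theorem not_dvd_of_mem_glaisher {p : ℕ} (hp : p.Prime) {D : Multiset ℕ} (hD : ∀ d ∈ D, 0 < d)
    {m : ℕ} (hm : m ∈ glaisher p D) : ¬p ∣ m := by
  obtain ⟨d, hd, hmd⟩ := Multiset.mem_bind.mp hm
  rw [Multiset.eq_of_mem_replicate hmd]
  exact Nat.not_dvd_ordCompl hp (hD d hd).ne'

section CyclePoly

variable (R : Type*) [CommRing R]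

/-- The polynomial `∏ (X ^ d - 1)` over the parts `d` of `D`, that is, the characteristic polynomial
of a permutation matrix of cycle type `D`. For a hyperelliptic curve `y ^ 2 = f`, the multiset `D`
records the cycle type of Frobenius on the branch points. -/
noncomputable def cyclePoly (D : Multiset ℕ) : R[X] :=
  (D.map fun d => (X : R[X]) ^ d - 1).prod

theorem cyclePoly_glaisher (p : ℕ) [ExpChar R p] (D : Multiset ℕ) :
    cyclePoly R (glaisher p D) = cyclePoly R D := by
  have split_part (d : ℕ) : ((X : R[X]) ^ ordCompl[p] d - 1) ^ ordProj[p] d = X ^ d - 1 := by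
    rw [sub_pow_expChar_pow, one_pow, ← pow_mul, mul_comm, Nat.ordProj_mul_ordCompl_eq_self]
  simp only [cyclePoly, glaisher, Multiset.map_bind, Multiset.prod_bind, Multiset.map_replicate,
    Multiset.prod_replicate, split_part]

theorem cyclePoly_singleton (d : ℕ) : cyclePoly R {d} = X ^ d - 1 := by
  simp only [cyclePoly, Multiset.map_singleton, Multiset.prod_singleton]

theorem cyclePoly_cons (d : ℕ) (D : Multiset ℕ) :
    cyclePoly R (d ::ₘ D) = (X ^ d - 1) * cyclePoly R D := by
  simp only [cyclePoly, Multiset.map_cons, Multiset.prod_cons]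

end CyclePoly

section PalindromicSextic

variable {R : Type*} [CommRing R]

/-- The palindromic sextic with coefficients `1, a₁, a₂, a₃, a₂, a₁, 1`: the shape modulo `2` of the
Weil polynomial of an abelian threefold over a finite field of odd characteristic. -/
noncomputable def palindromicSextic (a₁ a₂ a₃ : R) : R[X] :=
  X ^ 6 + C a₁ * X ^ 5 + C a₂ * X ^ 4 + C a₃ * X ^ 3 + C a₂ * X ^ 2 + C a₁ * X + 1

theorem coeff_four_palindromicSextic (a₁ a₂ a₃ : R) :
    (palindromicSextic a₁ a₂ a₃).coeff 4 = a₂ := by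
  simp [palindromicSextic, coeff_one, coeff_X_pow]

theorem coeff_three_palindromicSextic (a₁ a₂ a₃ : R) :
    (palindromicSextic a₁ a₂ a₃).coeff 3 = a₃ := by
  simp [palindromicSextic, coeff_one, coeff_X_pow]

end PalindromicSextic

theorem sum_count_nsmul_singleton_of_forall_mem {α : Type*} [DecidableEq α] {D : Multiset α}
    {s : Finset α} (hD : ∀ d ∈ D, d ∈ s) : ∑ d ∈ s, D.count d • {d} = D := by
  have hsubset : D.toFinset ⊆ s := fun d hd => hD d (Multiset.mem_toFinset.mp hd)
  rw [← Finset.sum_subset hsubset, Multiset.toFinset_sum_count_nsmul_eq]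
  intro d _ hd
  rw [Multiset.count_eq_zero_of_notMem (mt Multiset.mem_toFinset.mpr hd), zero_nsmul]

theorem eq_of_forall_odd_of_sum_eq_eight {D : Multiset ℕ} (hodd : ∀ d ∈ D, Odd d)
    (hsum : D.sum = 8) :
    D = {7, 1} ∨ D = {5, 3} ∨ D = {5, 1, 1, 1} ∨ D = {3, 3, 1, 1} ∨ D = {3, 1, 1, 1, 1, 1} ∨
      D = {1, 1, 1, 1, 1, 1, 1, 1} := by
  have hmem : ∀ d ∈ D, d ∈ ({1, 3, 5, 7} : Finset ℕ) := by
    intro d hd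
    have hle : d ≤ 8 := hsum ▸ Multiset.le_sum_of_mem hd
    have hd_odd := hodd d hd
    interval_cases d <;> revert hd_odd <;> decide
  obtain ⟨n₁, n₃, n₅, n₇, rfl⟩ : ∃ n₁ n₃ n₅ n₇ : ℕ,
      D = n₁ • {1} + n₃ • {3} + n₅ • {5} + n₇ • {7} := by
    refine ⟨D.count 1, D.count 3, D.count 5, D.count 7, ?_⟩
    simpa [add_assoc] using (sum_count_nsmul_singleton_of_forall_mem hmem).symm
  have hweight : n₁ + n₃ * 3 + n₅ * 5 + n₇ * 7 = 8 := by
    simpa [Multiset.sum_nsmul] using hsum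
  obtain rfl : n₁ = 8 - (n₃ * 3 + n₅ * 5 + n₇ * 7) := by lia
  have h₃ : n₃ ≤ 2 := by lia
  have h₅ : n₅ ≤ 1 := by lia
  have h₇ : n₇ ≤ 1 := by lia
  clear hodd hsum hmem
  interval_cases n₃ <;> interval_cases n₅ <;> interval_cases n₇ <;> first | lia | decide

section CharTwo

variable {R : Type*} [CommRing R] [CharP R 2]

theorem exists_X_sub_one_sq_mul_palindromicSextic_eq {D : Multiset ℕ} (hodd : ∀ d ∈ D, Odd d)
    (hsum : D.sum = 8) : ∃ a₁ a₂ a₃ : R, ¬(a₂ = 0 ∧ a₃ = 1) ∧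
      (X - 1) ^ 2 * palindromicSextic a₁ a₂ a₃ = cyclePoly R D := by
  have : Nontrivial R := CharP.nontrivial_of_char_ne_one (v := 2) (by decide)
  rcases eq_of_forall_odd_of_sum_eq_eight hodd hsum with rfl | rfl | rfl | rfl | rfl | rfl <;>
    simp only [Multiset.insert_eq_cons, cyclePoly_cons, cyclePoly_singleton, palindromicSextic]
  · exact ⟨1, 1, 1, by simp, by grind [C_0, C_1]⟩
  · exact ⟨0, 1, 1, by simp, by grind [C_0, C_1]⟩
  · exact ⟨1, 0, 0, by simp, by grind [C_0, C_1]⟩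
  · exact ⟨0, 0, 0, by simp, by grind [C_0, C_1]⟩
  · exact ⟨1, 1, 0, by simp, by grind [C_0, C_1]⟩
  · exact ⟨0, 1, 0, by simp, by grind [C_0, C_1]⟩

theorem genus_three_admissible_general (D : Multiset ℕ) (hpos : ∀ d ∈ D, 0 < d)
    (hsum : D.sum = 8) :
    ((X : R[X]) - 1) ^ 2 ∣ cyclePoly R D ∧
      ∀ h : R[X], (X - 1) ^ 2 * h = cyclePoly R D → ¬(h.coeff 4 = 0 ∧ h.coeff 3 = 1) := by
  have : ExpChar R 2 := .prime Nat.prime_two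
  have hodd : ∀ m ∈ glaisher 2 D, Odd m := fun m hm =>
    Nat.not_even_iff_odd.mp fun hm' => not_dvd_of_mem_glaisher Nat.prime_two hpos hm hm'.two_dvd
  obtain ⟨a₁, a₂, a₃, hpattern, hquot⟩ :=
    exists_X_sub_one_sq_mul_palindromicSextic_eq (R := R) hodd ((sum_glaisher 2 D).trans hsum)
  rw [cyclePoly_glaisher] at hquot
  refine ⟨Dvd.intro _ hquot, fun h hh => ?_⟩
  have monic_divisor : (((X : R[X]) - 1) ^ 2).Monic := (monic_X_sub_C 1).pow 2
  have h_eq : h = palindromicSextic a₁ a₂ a₃ :=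
    monic_divisor.isRegular.left (hh.trans hquot.symm)
  rwa [h_eq, coeff_four_palindromicSextic, coeff_three_palindromicSextic]

end CharTwo

/-- For every multiset `D` of positive integers with sum `8`, the polynomial
`∏_{d ∈ D} (X^d − 1) ∈ 𝔽₂[X]` is divisible by `(X − 1)²`, and the quotient `h` never has
coefficient of `X⁴` equal to `0` together with coefficient of `X³` equal to `1`. -/
theorem genus_three_admissible (D : Multiset ℕ) (hpos : ∀ d ∈ D, 0 < d)
    (hsum : D.sum = 8) :
    (((X : (ZMod 2)[X]) - 1) ^ 2 ∣ (D.map fun d => (X : (ZMod 2)[X]) ^ d - 1).prod) ∧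
      ∀ h : (ZMod 2)[X],
        ((X : (ZMod 2)[X]) - 1) ^ 2 * h = (D.map fun d => (X : (ZMod 2)[X]) ^ d - 1).prod →
          ¬(h.coeff 4 = 0 ∧ h.coeff 3 = 1) :=
  genus_three_admissible_general D hpos hsum
end

section
/- Fix an integer g ≥ 1 and set n = 2g + 2. The set S = {h ∈ 𝔽₂[X] : there exists a multiset D of positive integers with sum n such that (X − 1)² · h = ∏_{d ∈ D} (X^d − 1) in 𝔽₂[X]} is finite, and its cardinality equals the number of partitions of n into pairwise distinct parts. -/
open Polynomial

/-- The set of admissible Weil polynomials mod 2 for genus `g`: polynomials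
`h ∈ 𝔽₂[X]` such that `(X − 1)² ⬝ h = ∏_{d ∈ D} (X^d − 1)` for some multiset `D` of
positive integers with sum `2g + 2`. -/
def admissibleSet (g : ℕ) : Set (Polynomial (ZMod 2)) :=
  {h | ∃ D : Multiset ℕ, (∀ d ∈ D, 0 < d) ∧ D.sum = 2 * g + 2 ∧
    ((X : (ZMod 2)[X]) - 1) ^ 2 * h = (D.map fun d => (X : (ZMod 2)[X]) ^ d - 1).prod}

/-!
Over a ring of prime characteristic `p`, the Frobenius map gives
`X ^ (p ^ k * m) - 1 = (X ^ m - 1) ^ p ^ k`, so every product `∏ (X ^ d - 1)` is also the product of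
a partition of the same number into parts prime to `p`. Such a partition is recovered from its
product: its largest part is the largest `m` prime to `p` for which a primitive `m`-th root of unity
is a root. Hence the products are counted by the partitions into parts prime to `p`, and Glaisher's
theorem (Euler's for `p = 2`) counts these. If `p` divides `n > 0`, a partition of `n` into parts
prime to `p` has at least two parts, so every product is divisible by `(X - 1) ^ 2`, and dividing by
this monic polynomial does not change the count.
-/

/-- The polynomial `∏_{d ∈ D} (X ^ d - 1)`, which is the characteristic polynomial of a permutation
matrix of cycle type `D`. -/
noncomputable def prodXPowSubOne (R : Type*) [CommRing R] (D : Multiset ℕ) : R[X] :=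
  (D.map fun d => X ^ d - 1).prod

/-- The analogue of `admissibleSet` over any commutative ring `R` and for partitions of any `n`:
the quotients by `(X - 1) ^ 2` of the products `∏_{d ∈ D} (X ^ d - 1)`, where products not divisible
by `(X - 1) ^ 2` contribute nothing. -/
def admissibleQuotients (R : Type*) [CommRing R] (n : ℕ) : Set R[X] :=
  {h | ∃ D : Multiset ℕ, (∀ d ∈ D, 0 < d) ∧ D.sum = n ∧ (X - 1) ^ 2 * h = prodXPowSubOne R D}

/-- Glaisher's splitting map: every part `d = p ^ k * m` with `p ∤ m` is replaced by `p ^ k` copies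
of `m`. The junk part `0` is left alone. -/
def glaisherSplit (p : ℕ) (D : Multiset ℕ) : Multiset ℕ :=
  D.bind fun d => Multiset.replicate (ordProj[p] d) (ordCompl[p] d)

theorem sum_glaisherSplit (p : ℕ) (D : Multiset ℕ) : (glaisherSplit p D).sum = D.sum := by
  simp [glaisherSplit, Multiset.sum_bind, Nat.ordProj_mul_ordCompl_eq_self]

theorem not_dvd_of_mem_glaisherSplit {p : ℕ} (hp : p.Prime) {D : Multiset ℕ} (hD : 0 ∉ D)
    {m : ℕ} (hm : m ∈ glaisherSplit p D) : ¬ p ∣ m := by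
  obtain ⟨d, hd, hmd⟩ := Multiset.mem_bind.mp hm
  rw [Multiset.eq_of_mem_replicate hmd]
  exact Nat.not_dvd_ordCompl hp (ne_of_mem_of_not_mem hd hD)

theorem two_le_card_of_dvd_sum {p : ℕ} {D : Multiset ℕ} (hD : ∀ d ∈ D, ¬ p ∣ d) (hsum : D.sum ≠ 0)
    (hp : p ∣ D.sum) : 2 ≤ D.card := by
  by_contra! hcard
  obtain h0 | h1 : D.card = 0 ∨ D.card = 1 := by lia
  · simp [Multiset.card_eq_zero.mp h0] at hsum
  · obtain ⟨d, rfl⟩ := Multiset.card_eq_one.mp h1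
    exact hD d (Multiset.mem_singleton_self d) (by simpa using hp)

section CommRing

variable (R : Type*) [CommRing R]

theorem prodXPowSubOne_add (D E : Multiset ℕ) :
    prodXPowSubOne R (D + E) = prodXPowSubOne R D * prodXPowSubOne R E := by
  simp [prodXPowSubOne]

variable {R} in
theorem map_prodXPowSubOne {S : Type*} [CommRing S] (f : R →+* S) (D : Multiset ℕ) :
    (prodXPowSubOne R D).map f = prodXPowSubOne S D := by
  simp [prodXPowSubOne, Polynomial.map_multiset_prod]

theorem monic_prodXPowSubOne {D : Multiset ℕ} (hD : 0 ∉ D) : (prodXPowSubOne R D).Monic :=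
  monic_multiset_prod_of_monic D _ fun d hd => by
    simpa using monic_X_pow_sub_C (1 : R) (ne_of_mem_of_not_mem hd hD)

theorem X_sub_one_pow_card_dvd_prodXPowSubOne (D : Multiset ℕ) :
    (X - 1) ^ D.card ∣ prodXPowSubOne R D := by
  rw [← Multiset.prod_replicate, ← Multiset.map_const']
  exact Multiset.prod_dvd_prod_of_dvd _ _ fun d _ => sub_one_dvd_pow_sub_one X d

theorem prodXPowSubOne_glaisherSplit (p : ℕ) [Fact p.Prime] [CharP R p] (D : Multiset ℕ) :
    prodXPowSubOne R (glaisherSplit p D) = prodXPowSubOne R D := by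
  have frobenius (d : ℕ) : (X ^ ordCompl[p] d - 1 : R[X]) ^ ordProj[p] d = X ^ d - 1 := by
    rw [sub_pow_char_pow, one_pow, ← pow_mul, mul_comm, Nat.ordProj_mul_ordCompl_eq_self]
  simp [prodXPowSubOne, glaisherSplit, Multiset.map_bind, Multiset.prod_bind, frobenius]

theorem admissibleQuotients_eq_preimage (n : ℕ) :
    admissibleQuotients R n = ((X - 1 : R[X]) ^ 2 * ·) ⁻¹'
      Set.range fun P : n.Partition => prodXPowSubOne R P.parts := by
  ext h
  constructor
  · rintro ⟨D, hpos, hsum, hprod⟩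
    exact ⟨⟨D, fun hd => hpos _ hd, hsum⟩, hprod.symm⟩
  · rintro ⟨P, hP⟩
    exact ⟨P.parts, fun _ hd => P.parts_pos hd, P.parts_sum, hP.symm⟩

end CommRing

theorem aeval_prodXPowSubOne_eq_zero_iff {R A : Type*} [CommRing R] [CommRing A]
    [IsDomain A] [Algebra R A] {ζ : A} {m : ℕ} (hζ : IsPrimitiveRoot ζ m) (D : Multiset ℕ) :
    aeval ζ (prodXPowSubOne R D) = 0 ↔ ∃ d ∈ D, m ∣ d := by
  simp [prodXPowSubOne, map_multiset_prod, Multiset.prod_eq_zero_iff, sub_eq_zero,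
    hζ.pow_eq_one_iff_dvd]

section Field

variable {K : Type*} [Field K] {D E : Multiset ℕ}

theorem exists_dvd_of_prodXPowSubOne_eq (h : prodXPowSubOne K D = prodXPowSubOne K E) {m : ℕ}
    (hm : (m : K) ≠ 0) (hmD : m ∈ D) : ∃ e ∈ E, m ∣ e := by
  have : NeZero (m : K) := ⟨hm⟩
  obtain ⟨ζ, hζ⟩ := HasEnoughRootsOfUnity.exists_primitiveRoot (AlgebraicClosure K) m
  rw [← aeval_prodXPowSubOne_eq_zero_iff (R := K) hζ, ← h, aeval_prodXPowSubOne_eq_zero_iff hζ]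
  exact ⟨m, hmD, dvd_rfl⟩

theorem mem_of_prodXPowSubOne_eq (h : prodXPowSubOne K D = prodXPowSubOne K E)
    {m : ℕ} (hm : (m : K) ≠ 0) (hmD : m ∈ D) (hE : 0 ∉ E) (hmax : ∀ e ∈ E, e ≤ m) : m ∈ E := by
  obtain ⟨e, he, hme⟩ := exists_dvd_of_prodXPowSubOne_eq h hm hmD
  have hle : m ≤ e := Nat.le_of_dvd (Nat.pos_of_ne_zero (ne_of_mem_of_not_mem he hE)) hme
  rwa [hle.antisymm (hmax e he)]

theorem add_eq_zero_of_disjoint_of_prodXPowSubOne_eq (hD : ∀ d ∈ D, (d : K) ≠ 0)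
    (hE : ∀ e ∈ E, (e : K) ≠ 0) (hDE : Disjoint D E)
    (h : prodXPowSubOne K D = prodXPowSubOne K E) : D + E = 0 := by
  by_contra hne
  have hnonempty : (D + E).toFinset.Nonempty := Multiset.toFinset_nonempty.mpr hne
  obtain ⟨m, hm, hmax⟩ := (D + E).toFinset.exists_max_image id hnonempty
  simp only [Multiset.mem_toFinset, Multiset.mem_add, id_eq] at hm hmax
  have hD0 : 0 ∉ D := fun h0 => hD 0 h0 Nat.cast_zero
  have hE0 : 0 ∉ E := fun h0 => hE 0 h0 Nat.cast_zero
  rcases hm with hmD | hmE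
  · exact Multiset.disjoint_left.mp hDE hmD
      (mem_of_prodXPowSubOne_eq h (hD m hmD) hmD hE0 fun e he => hmax e (.inr he))
  · exact Multiset.disjoint_left.mp hDE
      (mem_of_prodXPowSubOne_eq h.symm (hE m hmE) hmE hD0 fun d hd => hmax d (.inl hd)) hmE

variable (K) in
theorem injOn_prodXPowSubOne : Set.InjOn (prodXPowSubOne K) {D | ∀ d ∈ D, (d : K) ≠ 0} := by
  intro D hD E hE h
  have hcancel : prodXPowSubOne K (D - E) = prodXPowSubOne K (E - D) := by
    have hinter : 0 ∉ D ∩ E := fun h0 => hD 0 (Multiset.mem_inter.mp h0).1 Nat.cast_zero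
    refine mul_right_cancel₀ (monic_prodXPowSubOne K hinter).ne_zero ?_
    rwa [← prodXPowSubOne_add, Multiset.sub_add_inter, Multiset.inter_comm,
      ← prodXPowSubOne_add, Multiset.sub_add_inter]
  have hdisjoint : Disjoint (D - E) (E - D) := Multiset.disjoint_left.mpr fun hd he =>
    (Multiset.mem_sub.mp hd).asymm (Multiset.mem_sub.mp he)
  have hzero := add_eq_zero_of_disjoint_of_prodXPowSubOne_eq
    (fun d hd => hD d (Multiset.mem_of_le tsub_le_self hd))
    (fun e he => hE e (Multiset.mem_of_le tsub_le_self he)) hdisjoint hcancel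
  obtain ⟨hDE, hED⟩ := add_eq_zero.mp hzero
  exact (tsub_eq_zero_iff_le.mp hDE).antisymm (tsub_eq_zero_iff_le.mp hED)

end Field

section CharP

variable (R : Type*) [CommRing R] (p : ℕ) [Fact p.Prime] [CharP R p]

theorem injOn_prodXPowSubOne_of_charP : Set.InjOn (prodXPowSubOne R) {D | ∀ d ∈ D, ¬ p ∣ d} := by
  intro D hD E hE h
  refine injOn_prodXPowSubOne (ZMod p) (x₁ := D) (x₂ := E) ?_ ?_ ?_
  · simpa [ZMod.natCast_eq_zero_iff] using hD
  · simpa [ZMod.natCast_eq_zero_iff] using hE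
  · apply map_injective _ (ZMod.castHom_injective R (n := p))
    rwa [map_prodXPowSubOne, map_prodXPowSubOne]

theorem range_prodXPowSubOne_parts (n : ℕ) :
    Set.range (fun P : n.Partition => prodXPowSubOne R P.parts) =
      (fun P : n.Partition => prodXPowSubOne R P.parts) ''
        Nat.Partition.restricted n (¬ p ∣ ·) := by
  refine (Set.range_subset_iff.mpr fun P => ?_).antisymm (Set.image_subset_range _ _)
  have h0 : 0 ∉ P.parts := fun h => (P.parts_pos h).false
  have hsplit {m : ℕ} (hm : m ∈ glaisherSplit p P.parts) : ¬ p ∣ m :=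
    not_dvd_of_mem_glaisherSplit Fact.out h0 hm
  refine ⟨⟨glaisherSplit p P.parts, fun hm => ?_, ?_⟩, ?_, prodXPowSubOne_glaisherSplit R p P.parts⟩
  · exact Nat.pos_of_ne_zero fun hm0 => hsplit hm (hm0 ▸ dvd_zero p)
  · rw [sum_glaisherSplit, P.parts_sum]
  · simpa [Nat.Partition.restricted] using fun _ => hsplit

theorem ncard_range_prodXPowSubOne_parts (n : ℕ) :
    (Set.range fun P : n.Partition => prodXPowSubOne R P.parts).ncard =
      (Nat.Partition.countRestricted n p).card := by
  have hinj : Set.InjOn (fun P : n.Partition => prodXPowSubOne R P.parts)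
      (Nat.Partition.restricted n (¬ p ∣ ·)) := fun P hP Q hQ h => by
    refine Nat.Partition.ext (injOn_prodXPowSubOne_of_charP R p ?_ ?_ h)
    · simpa [Nat.Partition.restricted] using hP
    · simpa [Nat.Partition.restricted] using hQ
  rw [range_prodXPowSubOne_parts R p, hinj.ncard_image, Set.ncard_coe_finset,
    Nat.Partition.card_restricted_eq_card_countRestricted n (NeZero.pos p)]

theorem X_sub_one_sq_dvd_prodXPowSubOne {D : Multiset ℕ} (hD : 0 ∉ D) (hsum : D.sum ≠ 0)
    (hp : p ∣ D.sum) : (X - 1) ^ 2 ∣ prodXPowSubOne R D := by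
  rw [← prodXPowSubOne_glaisherSplit R p]
  refine (pow_dvd_pow _ ?_).trans (X_sub_one_pow_card_dvd_prodXPowSubOne R _)
  rw [← sum_glaisherSplit p] at hsum hp
  exact two_le_card_of_dvd_sum (fun _ => not_dvd_of_mem_glaisherSplit Fact.out hD) hsum hp

theorem admissibleSet_finite_card_general {n : ℕ} (hn : n ≠ 0) (hpn : p ∣ n) :
    (admissibleQuotients R n).Finite ∧
      (admissibleQuotients R n).ncard = (Nat.Partition.countRestricted n p).card := by
  have hinj : Function.Injective ((X - 1 : R[X]) ^ 2 * ·) := by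
    have hmonic : ((X - 1 : R[X]) ^ 2).Monic := by simpa using (monic_X_sub_C (1 : R)).pow 2
    exact hmonic.isRegular.left
  have hdvd : (Set.range fun P : n.Partition => prodXPowSubOne R P.parts) ⊆
      Set.range ((X - 1 : R[X]) ^ 2 * ·) := by
    rintro _ ⟨P, rfl⟩
    obtain ⟨h, hh⟩ := X_sub_one_sq_dvd_prodXPowSubOne R p (D := P.parts)
      (fun h0 => (P.parts_pos h0).false) (by rwa [P.parts_sum]) (by rwa [P.parts_sum])
    exact ⟨h, hh.symm⟩
  rw [admissibleQuotients_eq_preimage]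
  exact ⟨(Set.finite_range _).preimage hinj.injOn,
    (Set.ncard_preimage_of_injective_subset_range hinj hdvd).trans
      (ncard_range_prodXPowSubOne_parts R p n)⟩

end CharP

/-- The set of admissible Weil polynomials mod 2 for genus `g ≥ 1` is finite, of
cardinality the number of partitions of `2g + 2` into pairwise distinct parts. -/
theorem admissibleSet_finite_card (g : ℕ) (hg : 1 ≤ g) :
    (admissibleSet g).Finite ∧
      (admissibleSet g).ncard = (Nat.Partition.distincts (2 * g + 2)).card := by
  rw [← Nat.Partition.countRestricted_two]
  exact admissibleSet_finite_card_general (ZMod 2) 2 (by lia) (by lia)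
end

section
/- Let n be a positive integer and let D and D' be multisets of positive integers, each with no repeated elements, such that the sum of D equals n and the sum of D' equals n. If ∏_{d ∈ D} (X^d − 1) = ∏_{d ∈ D'} (X^d − 1) in 𝔽₂[X], then D = D'. -/
open Polynomial

/-!
If every part of `D` is at least `d > 0`, then
`∏ (X ^ e - 1) ≡ (-1) ^ |D| * (1 - m * X ^ d)` modulo `X ^ (d + 1)`, where `m` is the multiplicity
of `d` in `D`. The product therefore determines the image of `m` in the coefficient ring, the sign
being read off at `X ^ 0`. Cancelling the monic factors of the parts below `d` recovers the
multiplicities one after another, in increasing order of `d`. Multiplicities `0` and `1` have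
different images in `𝔽₂`.
-/

lemma count_eq_of_natCast_count_eq_of_nodup {R α : Type*} [AddMonoidWithOne R] [NeZero (1 : R)]
    [DecidableEq α] {s t : Multiset α} {a : α} (hs : s.Nodup) (ht : t.Nodup)
    (h : (s.count a : R) = t.count a) : s.count a = t.count a := by
  rw [Multiset.count_eq_of_nodup hs, Multiset.count_eq_of_nodup ht] at h ⊢
  split_ifs at h ⊢ <;> simp_all

section CommRing

variable {R : Type*} [CommRing R] {D D' : Multiset ℕ} {d : ℕ}

lemma coeff_zero_prod_X_pow_sub_one (hpos : ∀ e ∈ D, 0 < e) :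
    (D.map fun e => (X : R[X]) ^ e - 1).prod.coeff 0 = (-1) ^ D.card := by
  have hcoeff : ((D.map fun e => (X : R[X]) ^ e - 1).map fun f => f.coeff 0) =
      D.map fun _ => (-1 : R) := by
    rw [Multiset.map_map]
    refine Multiset.map_congr rfl fun e he => ?_
    simp [coeff_X_pow, (hpos e he).ne]
  rw [coeff_zero_multiset_prod, hcoeff, Multiset.map_const', Multiset.prod_replicate]

lemma coeff_prod_X_pow_sub_one_of_forall_le (hd : 0 < d) (hle : ∀ e ∈ D, d ≤ e) :
    (D.map fun e => (X : R[X]) ^ e - 1).prod.coeff d = -((-1 : R) ^ D.card * D.count d) := by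
  induction D using Multiset.induction_on with
  | empty => simp [coeff_one, hd.ne']
  | cons a D ih =>
    obtain ⟨hda, hleD⟩ := Multiset.forall_mem_cons.1 hle
    rw [Multiset.map_cons, Multiset.prod_cons, sub_mul, one_mul, coeff_sub, ih hleD,
      coeff_X_pow_mul', Multiset.card_cons]
    rcases hda.eq_or_lt with rfl | hlt
    · rw [if_pos le_rfl, Nat.sub_self,
        coeff_zero_prod_X_pow_sub_one fun e he => hd.trans_le (hleD e he),
        Multiset.count_cons_self]
      push_cast
      ring
    · rw [if_neg hlt.not_ge, Multiset.count_cons_of_ne hlt.ne]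
      ring

lemma natCast_count_eq_of_forall_le (hd : 0 < d) (hle : ∀ e ∈ D, d ≤ e) (hle' : ∀ e ∈ D', d ≤ e)
    (hprod : (D.map fun e => (X : R[X]) ^ e - 1).prod =
      (D'.map fun e => (X : R[X]) ^ e - 1).prod) :
    (D.count d : R) = D'.count d := by
  have hsign : (-1 : R) ^ D.card = (-1) ^ D'.card := by
    rw [← coeff_zero_prod_X_pow_sub_one fun e he => hd.trans_le (hle e he), hprod,
      coeff_zero_prod_X_pow_sub_one fun e he => hd.trans_le (hle' e he)]
  have hcoeff : (-1 : R) ^ D.card * D.count d = (-1) ^ D.card * D'.count d := by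
    rw [← neg_inj, ← coeff_prod_X_pow_sub_one_of_forall_le hd hle, hprod,
      coeff_prod_X_pow_sub_one_of_forall_le hd hle', hsign]
  exact (isUnit_neg_one.pow D.card).mul_left_cancel hcoeff

lemma monic_prod_X_pow_sub_one (hpos : ∀ e ∈ D, 0 < e) :
    (D.map fun e => (X : R[X]) ^ e - 1).prod.Monic :=
  monic_multiset_prod_of_monic _ _ fun e he => monic_X_pow_sub_C 1 (hpos e he).ne'

lemma prod_filter_not_eq_of_filter_eq {p : ℕ → Prop} [DecidablePred p]
    (hpos : ∀ e ∈ D, 0 < e)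
    (hfilter : D.filter p = D'.filter p)
    (hprod : (D.map fun e => (X : R[X]) ^ e - 1).prod =
      (D'.map fun e => (X : R[X]) ^ e - 1).prod) :
    ((D.filter fun e => ¬p e).map fun e => (X : R[X]) ^ e - 1).prod =
      ((D'.filter fun e => ¬p e).map fun e => (X : R[X]) ^ e - 1).prod := by
  have hmonic : ((D.filter p).map fun e => (X : R[X]) ^ e - 1).prod.Monic :=
    monic_prod_X_pow_sub_one fun e he => hpos e (Multiset.mem_of_mem_filter he)
  rw [← Multiset.filter_add_not p D, ← Multiset.filter_add_not p D', ← hfilter,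
    Multiset.map_add, Multiset.map_add, Multiset.prod_add, Multiset.prod_add] at hprod
  exact hmonic.isRegular.left hprod

lemma natCast_count_eq_of_filter_lt_eq (hd : 0 < d) (hpos : ∀ e ∈ D, 0 < e)
    (hlt : D.filter (· < d) = D'.filter (· < d))
    (hprod : (D.map fun e => (X : R[X]) ^ e - 1).prod =
      (D'.map fun e => (X : R[X]) ^ e - 1).prod) :
    (D.count d : R) = D'.count d := by
  simpa only [Multiset.count_filter, lt_irrefl, not_false_eq_true, if_true] using
    natCast_count_eq_of_forall_le hd
      (fun e he => not_lt.1 (Multiset.mem_filter.1 he).2)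
      (fun e he => not_lt.1 (Multiset.mem_filter.1 he).2)
      (prod_filter_not_eq_of_filter_eq hpos hlt hprod)

/-- Besides distinct parts over a nontrivial ring, `hcast` covers arbitrary multiplicities in
characteristic zero and multiplicities less than `p` in characteristic `p`. -/
theorem distinct_parts_unique_general
    (hcast : ∀ d, (D.count d : R) = D'.count d → D.count d = D'.count d)
    (hpos : ∀ d ∈ D, 0 < d) (hpos' : ∀ d ∈ D', 0 < d)
    (hprod : (D.map fun d => (X : R[X]) ^ d - 1).prod =
      (D'.map fun d => (X : R[X]) ^ d - 1).prod) :
    D = D' := by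
  ext d
  induction d using Nat.strong_induction_on with
  | _ d ih =>
    rcases d.eq_zero_or_pos with rfl | hd
    · rw [Multiset.count_eq_zero_of_notMem fun h => (hpos 0 h).false,
        Multiset.count_eq_zero_of_notMem fun h => (hpos' 0 h).false]
    · have hlt : D.filter (· < d) = D'.filter (· < d) := by
        ext e
        simp only [Multiset.count_filter]
        split_ifs with he
        exacts [ih e he, rfl]
      exact hcast d (natCast_count_eq_of_filter_lt_eq hd hpos hlt hprod)

end CommRing

/-- Two multisets of positive integers with no repeated elements and the same sum `n`,
whose products `∏_{d} (X^d − 1)` agree in `𝔽₂[X]`, are equal. -/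
theorem distinct_parts_unique (n : ℕ) (hn : 0 < n) (D D' : Multiset ℕ)
    (hD : D.Nodup) (hD' : D'.Nodup)
    (hDpos : ∀ d ∈ D, 0 < d) (hD'pos : ∀ d ∈ D', 0 < d)
    (hDsum : D.sum = n) (hD'sum : D'.sum = n)
    (hprod : (D.map fun d => (X : (ZMod 2)[X]) ^ d - 1).prod =
      (D'.map fun d => (X : (ZMod 2)[X]) ^ d - 1).prod) :
    D = D' :=
  distinct_parts_unique_general (fun _ => count_eq_of_natCast_count_eq_of_nodup hD hD')
    hDpos hD'pos hprod
end

section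
/- Let n be a positive integer. For every multiset D of positive integers with sum n, there exists a multiset D' of positive integers with sum n, having no repeated elements, such that ∏_{d ∈ D} (X^d − 1) = ∏_{d ∈ D'} (X^d − 1) in 𝔽₂[X]. -/
open Polynomial

/-! In characteristic `p` the Frobenius map gives `x ^ (p * d) - 1 = (x ^ d - 1) ^ p`, so replacing
`p` equal parts `d` by one part `p * d` changes neither the sum nor the product. Each replacement
lowers the number of parts, so the process stops, and it can only stop at a multiset in which no
part occurs `p` times. -/

/-- `mergeParts k d D` replaces `k` copies of the part `d` of the multiset `D` by the single part
`k * d`. With fewer than `k` copies present, all of them are removed, so the sum is preserved only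
when `k ≤ D.count d` or `d = 0`. -/
def mergeParts (k d : ℕ) (D : Multiset ℕ) : Multiset ℕ :=
  (k * d) ::ₘ (D - Multiset.replicate k d)

section mergeParts

variable {k d : ℕ} {D : Multiset ℕ}

@[to_additive]
theorem prod_map_mergeParts {M : Type*} [CommMonoid M] {f : ℕ → M} (hf : f (k * d) = f d ^ k)
    (h : k ≤ D.count d) : ((mergeParts k d D).map f).prod = (D.map f).prod := by
  obtain ⟨E, rfl⟩ := Multiset.le_iff_exists_add.mp (Multiset.le_count_iff_replicate_le.mp h)
  simp [mergeParts, hf]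

theorem sum_mergeParts (h : k ≤ D.count d) : (mergeParts k d D).sum = D.sum := by
  simpa using sum_map_mergeParts (f := id) (smul_eq_mul k d).symm h

theorem card_mergeParts_lt (hk : 1 < k) (h : k ≤ D.count d) : (mergeParts k d D).card < D.card := by
  obtain ⟨E, rfl⟩ := Multiset.le_iff_exists_add.mp (Multiset.le_count_iff_replicate_le.mp h)
  simp only [mergeParts, add_tsub_cancel_left, Multiset.card_cons, Multiset.card_add,
    Multiset.card_replicate]
  omega

theorem pos_of_mem_mergeParts (hk : 0 < k) (h : k ≤ D.count d) (hD : ∀ a ∈ D, 0 < a) :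
    ∀ a ∈ mergeParts k d D, 0 < a := by
  have hd : d ∈ D := Multiset.count_pos.mp (hk.trans_le h)
  exact Multiset.forall_mem_cons.mpr
    ⟨Nat.mul_pos hk (hD d hd), fun a ha => hD a (Multiset.mem_of_le tsub_le_self ha)⟩

end mergeParts

theorem exists_count_lt_prod_map_eq {M : Type*} [CommMonoid M] {k : ℕ} (hk : 1 < k) {f : ℕ → M}
    (hf : ∀ d, f (k * d) = f d ^ k) (D : Multiset ℕ) (hD : ∀ d ∈ D, 0 < d) :
    ∃ D' : Multiset ℕ, (∀ d ∈ D', 0 < d) ∧ D'.sum = D.sum ∧ (∀ d, D'.count d < k) ∧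
      (D.map f).prod = (D'.map f).prod := by
  by_cases hcount : ∀ d, D.count d < k
  · exact ⟨D, hD, rfl, hcount, rfl⟩
  · obtain ⟨d, hd⟩ : ∃ d, k ≤ D.count d := by simpa using hcount
    obtain ⟨D', hpos, hsum, hlt, hprod⟩ := exists_count_lt_prod_map_eq hk hf (mergeParts k d D)
      (pos_of_mem_mergeParts (zero_lt_one.trans hk) hd hD)
    exact ⟨D', hpos, hsum.trans (sum_mergeParts hd), hlt,
      (prod_map_mergeParts (hf d) hd).symm.trans hprod⟩
termination_by D.card
decreasing_by exact card_mergeParts_lt hk hd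

theorem pow_char_mul_sub_one {R : Type*} [CommRing R] (p : ℕ) [Fact p.Prime] [CharP R p]
    (x : R) (d : ℕ) : x ^ (p * d) - 1 = (x ^ d - 1) ^ p := by
  rw [sub_pow_char, one_pow, ← pow_mul, mul_comm]

theorem exists_distinct_parts_equivalent_general {R : Type*} [CommRing R] (p : ℕ) [Fact p.Prime]
    [CharP R p] (x : R) (D : Multiset ℕ) (hDpos : ∀ d ∈ D, 0 < d) :
    ∃ D' : Multiset ℕ, (∀ d ∈ D', 0 < d) ∧ D'.sum = D.sum ∧ (∀ d, D'.count d < p) ∧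
      (D.map fun d => x ^ d - 1).prod = (D'.map fun d => x ^ d - 1).prod :=
  exists_count_lt_prod_map_eq (Fact.out : p.Prime).one_lt (pow_char_mul_sub_one p x) D hDpos

/-- Every multiset of positive integers with sum `n` has the same product
`∏_{d} (X^d − 1)` in `𝔽₂[X]` as some multiset of positive integers with sum `n`
having no repeated elements. -/
theorem exists_distinct_parts_equivalent (n : ℕ) (hn : 0 < n) (D : Multiset ℕ)
    (hDpos : ∀ d ∈ D, 0 < d) (hDsum : D.sum = n) :
    ∃ D' : Multiset ℕ, (∀ d ∈ D', 0 < d) ∧ D'.sum = n ∧ D'.Nodup ∧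
      (D.map fun d => (X : (ZMod 2)[X]) ^ d - 1).prod =
        (D'.map fun d => (X : (ZMod 2)[X]) ^ d - 1).prod := by
  simpa only [hDsum, Multiset.nodup_iff_count_le_one, Nat.lt_succ_iff] using
    exists_distinct_parts_equivalent_general 2 (X : (ZMod 2)[X]) D hDpos
end

section
/- Let K be a finite field of odd characteristic, let f ∈ K[X] be squarefree, let L be a finite field extension of K, and let M be a field extension of L with [M : L] = 2. Then N_f(L) ≡ N_f(M) (mod 2), where N_f(E) denotes the number of pairs (x, y) ∈ E × E with y² = f(x). -/
/-!
A group acting on an algebra `B` with invariant subring `A` acts on the solutions in `B` of any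
system of polynomial equations with coefficients in `A`, and the solutions it fixes are exactly
those with coordinates in `A`. If the group is a `p`-group, all other orbits have size divisible
by `p`. For the theorem, the group is `Gal(M/L)`, of order `2`, and the system is the single
equation `y² - f(x) = 0`.
-/

open MulAction

section FixedPoints

variable {p : ℕ} [Fact p.Prime] {G : Type*} [Group G]

theorem ncard_modEq_ncard_inter_fixedPoints {X : Type*} [MulAction G X] (hG : IsPGroup p G)
    {S : Set X} (hS : S.Finite) (hGS : ∀ g : G, ∀ x ∈ S, g • x ∈ S) :
    S.ncard ≡ (S ∩ fixedPoints G X).ncard [MOD p] := by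
  let T : SubMulAction G X := ⟨S, fun g {x} hx ↦ hGS g x hx⟩
  have : Finite T := hS
  have fixedPoints_coe : (Subtype.val '' fixedPoints G T : Set X) = S ∩ fixedPoints G X := by
    ext x
    constructor
    · rintro ⟨x, hx, rfl⟩
      exact ⟨x.2, fun g ↦ congrArg Subtype.val (hx g)⟩
    · rintro ⟨hxS, hx⟩
      exact ⟨⟨x, hxS⟩, fun g ↦ Subtype.ext (hx g), rfl⟩
  rw [← fixedPoints_coe, Set.ncard_image_of_injective _ Subtype.val_injective]
  exact hG.card_modEq_card_fixedPoints T

variable {A B : Type*} [CommSemiring A] [Semiring B] [Algebra A B]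
  [MulSemiringAction G B] [SMulCommClass G A B] [Algebra.IsInvariant A B G]

variable (A B G) in
theorem fixedPoints_pi_eq_range_algebraMap_comp (ι : Type*) :
    fixedPoints G (ι → B) = Set.range (algebraMap A B ∘ · : (ι → A) → ι → B) := by
  ext z
  constructor
  · intro hz
    choose x hx using fun i ↦
      Algebra.IsInvariant.isInvariant (A := A) (z i) fun g : G ↦ congrFun (hz g) i
    exact ⟨x, funext hx⟩
  · rintro ⟨x, rfl⟩ g
    exact funext fun i ↦ smul_algebraMap g (x i)

theorem ncard_preimage_algebraMap_comp_modEq_ncard [FaithfulSMul A B] (hG : IsPGroup p G)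
    {ι : Type*} {S : Set (ι → B)} (hS : S.Finite) (hGS : ∀ g : G, ∀ z ∈ S, g • z ∈ S) :
    ((algebraMap A B ∘ ·) ⁻¹' S).ncard ≡ S.ncard [MOD p] := by
  have hinj : Function.Injective (algebraMap A B ∘ · : (ι → A) → ι → B) :=
    (FaithfulSMul.algebraMap_injective A B).comp_left
  calc ((algebraMap A B ∘ ·) ⁻¹' S).ncard
    _ = (S ∩ fixedPoints G (ι → B)).ncard := by
      rw [fixedPoints_pi_eq_range_algebraMap_comp G A B, ← Set.image_preimage_eq_inter_range,
        Set.ncard_image_of_injective _ hinj]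
    _ ≡ S.ncard [MOD p] := (ncard_modEq_ncard_inter_fixedPoints hG hS hGS).symm

end FixedPoints

section PolynomialSystem

open MvPolynomial

/-- The set of common zeros in `E` of a family `F` of polynomials over `R`. Unlike
`MvPolynomial.zeroLocus`, it allows `R` and `E` to be arbitrary commutative rings. -/
def commonZeros {R ι : Type*} [CommRing R] (F : Set (MvPolynomial ι R))
    (E : Type*) [CommRing E] [Algebra R E] : Set (ι → E) :=
  {x | ∀ P ∈ F, aeval x P = 0}

variable {R ι : Type*} [CommRing R] {A B : Type*} [CommRing A] [CommRing B] [Algebra R A]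
  [Algebra R B]

theorem preimage_algebraMap_comp_commonZeros [Algebra A B] [IsScalarTower R A B] [FaithfulSMul A B]
    (F : Set (MvPolynomial ι R)) :
    (algebraMap A B ∘ ·) ⁻¹' commonZeros F B = commonZeros F A := by
  ext x
  simp only [commonZeros, Set.mem_preimage, Set.mem_ofPred_eq, aeval_algebraMap_apply,
    FaithfulSMul.algebraMap_eq_zero_iff]

theorem smul_mem_commonZeros {G : Type*} [Monoid G] [MulSemiringAction G B] [SMulCommClass G R B]
    {F : Set (MvPolynomial ι R)} (g : G) {z : ι → B} (hz : z ∈ commonZeros F B) :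
    g • z ∈ commonZeros F B := fun P hP ↦
  calc aeval (g • z) P
    _ = g • aeval z P := (comp_aeval_apply z (MulSemiringAction.toAlgHom R B g) P).symm
    _ = 0 := by rw [hz P hP, smul_zero]

theorem card_pairs_eq_ncard_commonZeros (f : Polynomial R) (E : Type*) [CommRing E] [Algebra R E] :
    Nat.card {p : E × E // p.2 ^ 2 = Polynomial.aeval p.1 f} =
      (commonZeros {X 1 ^ 2 - f.toMvPolynomial (0 : Fin 2)} E).ncard :=
  Nat.card_congr <| (finTwoArrowEquiv E).symm.subtypeEquiv fun p ↦ by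
    simp [commonZeros, aeval_toMvPolynomial, sub_eq_zero]

theorem card_pairs_modEq_card_pairs_quadratic_ext_general
    {p : ℕ} [Fact p.Prime] {G : Type*} [Group G] (hG : IsPGroup p G)
    [Algebra A B] [IsScalarTower R A B] [FaithfulSMul A B]
    [MulSemiringAction G B] [SMulCommClass G A B] [Algebra.IsInvariant A B G]
    {F : Set (MvPolynomial ι R)} (hF : (commonZeros F B).Finite) :
    (commonZeros F A).ncard ≡ (commonZeros F B).ncard [MOD p] := by
  have : SMulCommClass G R B :=
    ⟨fun g r b ↦ by rw [← algebraMap_smul A r b, smul_comm, algebraMap_smul]⟩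
  rw [← preimage_algebraMap_comp_commonZeros (B := B) F]
  exact ncard_preimage_algebraMap_comp_modEq_ncard hG hF fun g _ ↦ smul_mem_commonZeros g

end PolynomialSystem

/-- Let `K` be a finite field of odd characteristic, `f ∈ K[X]` squarefree, `L/K` a finite
extension and `M/L` an extension of degree 2. Then the number of solutions of `y² = f(x)`
over `L` is congruent mod 2 to the number of solutions over `M`. -/
theorem card_pairs_modEq_card_pairs_quadratic_ext
    (K : Type*) [Field K] [Fintype K] (hchar : Odd (ringChar K))
    (f : Polynomial K) (hf : Squarefree f)
    (L : Type*) [Field L] [Algebra K L] [FiniteDimensional K L]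
    (M : Type*) [Field M] [Algebra K M] [Algebra L M] [IsScalarTower K L M]
    (hM : Module.finrank L M = 2) :
    Nat.card {p : L × L // p.2 ^ 2 = Polynomial.aeval p.1 f} ≡
      Nat.card {p : M × M // p.2 ^ 2 = Polynomial.aeval p.1 f} [MOD 2] := by
  have : FiniteDimensional L M := Module.finite_of_finrank_pos (by rw [hM]; exact two_pos)
  have : Finite L := Module.finite_of_finite K
  have : Finite M := Module.finite_of_finite L
  have hG : IsPGroup 2 Gal(M/L) :=
    .of_card (n := 1) (by rw [IsGalois.card_aut_eq_finrank, hM, pow_one])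
  rw [card_pairs_eq_ncard_commonZeros, card_pairs_eq_ncard_commonZeros]
  exact card_pairs_modEq_card_pairs_quadratic_ext_general hG (Set.toFinite _)
end

section
/- Let K be a finite field of odd characteristic, let f ∈ K[X] be squarefree, and let n be a positive integer. For each divisor d of n, let K_d be a field extension of K with [K_d : K] = d. Then n times the number of monic irreducible factors of f in K[X] of degree exactly n is congruent modulo 2 to ∑_{d | n} μ(n/d) · N_f(K_d), where μ is the Möbius function and N_f(E) denotes the number of pairs (x, y) ∈ E × E with y² = f(x). -/
open Polynomial UniqueFactorizationMonoid

/-!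
The involution `(x, y) ↦ (x, -y)` of the curve `y² = f(x)` fixes exactly the points with `y = 0`,
so modulo 2 the number of points over `E` is the number of roots of `f` in `E`. For a finite field
`E` of degree `d` over `K`, an irreducible `g` of degree `e` has as many roots in `E` as there are
`K`-embeddings of `K[X]/(g)` into `E`: `e` of them if `e ∣ d` and none otherwise. So `f` has exactly
`∑_{e ∣ d} e · #{g ∣ f irreducible of degree e}` distinct roots in `E`, and Möbius inversion
isolates the term `e = n`.
-/

theorem card_sq_eq_modEq_card_eq_zero {X F : Type*} [Finite X] [Field F] [Finite F]
    (hF : ringChar F ≠ 2) (f : X → F) :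
    Nat.card {p : X × F // p.2 ^ 2 = f p.1} ≡ Nat.card {x // f x = 0} [MOD 2] := by
  classical
  let σ : Function.End {p : X × F // p.2 ^ 2 = f p.1} :=
    fun p ↦ ⟨(p.1.1, -p.1.2), by simpa only [neg_sq] using p.2⟩
  have σ_sq : σ ^ 2 ^ 1 = 1 :=
    funext fun p ↦ Subtype.ext <| Prod.ext rfl <| neg_neg p.1.2
  have mem_fixedPoints_iff (p) : p ∈ Function.fixedPoints σ ↔ p.1.2 = 0 := by
    rw [← Ring.eq_self_iff_eq_zero_of_char_ne_two hF]
    simp [Function.IsFixedPt, σ, Subtype.ext_iff, Prod.ext_iff]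
  let e : Function.fixedPoints σ ≃ {x // f x = 0} :=
    { toFun p := ⟨p.1.1.1, by
        rw [← p.1.2, (mem_fixedPoints_iff _).1 p.2, zero_pow two_ne_zero]⟩
      invFun x := ⟨⟨(x.1, 0), by rw [x.2, zero_pow two_ne_zero]⟩, (mem_fixedPoints_iff _).2 rfl⟩
      left_inv p := Subtype.ext <| Subtype.ext <|
        Prod.ext rfl ((mem_fixedPoints_iff _).1 p.2).symm
      right_inv _ := rfl }
  have := Fintype.ofFinite {p : X × F // p.2 ^ 2 = f p.1}
  rw [← Nat.card_congr e, Nat.card_eq_fintype_card, Nat.card_eq_fintype_card]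
  exact Equiv.Perm.card_fixedPoints_modEq σ_sq

theorem card_sq_eq_aeval_modEq_ncard_rootSet {K E : Type*} [Field K] [Field E] [Finite E]
    [Algebra K E] (hK : ringChar K ≠ 2) {f : K[X]} (hf : f ≠ 0) :
    Nat.card {p : E × E // p.2 ^ 2 = aeval p.1 f} ≡ (f.rootSet E).ncard [MOD 2] := by
  rw [← Nat.card_coe_set_eq,
    Nat.card_congr (Equiv.subtypeEquivRight fun _ ↦ mem_rootSet_of_ne hf)]
  exact card_sq_eq_modEq_card_eq_zero (Algebra.ringChar_eq K E ▸ hK) fun x ↦ aeval x f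

theorem sum_ite_dvd_eq_sum_divisors_mul_card {ι : Type*} (s : Finset ι) (w : ι → ℕ) {d : ℕ}
    (hd : d ≠ 0) :
    ∑ i ∈ s, (if w i ∣ d then w i else 0) = ∑ e ∈ d.divisors, e * (s.filter (w · = e)).card := by
  have mem_divisors : ∀ i ∈ s.filter (w · ∣ d), w i ∈ d.divisors := fun i hi ↦
    Nat.mem_divisors.2 ⟨(Finset.mem_filter.1 hi).2, hd⟩
  rw [← Finset.sum_filter, ← Finset.sum_fiberwise_of_maps_to' mem_divisors fun e ↦ e]
  refine Finset.sum_congr rfl fun e he ↦ ?_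
  have filter_eq : (s.filter (w · ∣ d)).filter (w · = e) = s.filter (w · = e) := by
    rw [Finset.filter_filter]
    refine Finset.filter_congr fun i _ ↦ and_iff_right_of_imp ?_
    rintro rfl
    exact Nat.dvd_of_mem_divisors he
  rw [filter_eq, Finset.sum_const, smul_eq_mul, mul_comm]

theorem ncard_rootSet_eq_sum_primeFactors {K E : Type*} [Field K] [DecidableEq K] [CommRing E]
    [IsDomain E] [Algebra K E] {f : K[X]} (hf : f ≠ 0) :
    (f.rootSet E).ncard = ∑ g ∈ primeFactors f, (g.rootSet E).ncard := by
  classical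
  have minpoly_mem {x : E} (hx : aeval x f = 0) : minpoly K x ∈ primeFactors f := by
    have hint : IsIntegral K x := IsAlgebraic.isIntegral ⟨f, hf, hx⟩
    exact mem_primeFactors.2 <| (Polynomial.mem_normalizedFactors_iff hf).2
      ⟨minpoly.irreducible hint, minpoly.monic hint, minpoly.dvd K x hx⟩
  have fiber_eq {g : K[X]} (hg : g ∈ primeFactors f) :
      {x ∈ (f.aroots E).toFinset | minpoly K x = g} = (g.aroots E).toFinset := by
    obtain ⟨hirr, hmonic, hdvd⟩ :=
      (Polynomial.mem_normalizedFactors_iff hf).1 (mem_primeFactors.1 hg)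
    ext x
    simp only [Finset.mem_filter, Multiset.mem_toFinset, mem_aroots, ne_eq, hf, hmonic.ne_zero,
      not_false_eq_true, true_and]
    constructor
    · rintro ⟨-, rfl⟩
      exact minpoly.aeval K x
    · intro hx
      exact ⟨aeval_eq_zero_of_dvd_aeval_eq_zero hdvd hx,
        (minpoly.eq_of_irreducible_of_monic hirr hx hmonic).symm⟩
  simp only [rootSet_def, Set.ncard_coe_finset]
  rw [Finset.card_eq_sum_card_fiberwise (f := minpoly K) (t := primeFactors f)
    fun x hx ↦ minpoly_mem (mem_aroots.1 (Multiset.mem_toFinset.1 hx)).2]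
  exact Finset.sum_congr rfl fun g hg ↦ by rw [fiber_eq hg]

section RootCount

variable {K E : Type*} [Field K] [Field E] [Algebra K E]

theorem ncard_rootSet_of_irreducible [Finite E] {g : K[X]} (hg : Irreducible g) :
    (g.rootSet E).ncard = if g.natDegree ∣ Module.finrank K E then g.natDegree else 0 := by
  classical
  have := Fact.mk hg
  have finrank_eq : Module.finrank K (AdjoinRoot g) = g.natDegree :=
    finrank_quotient_span_eq_natDegree
  have ncard_eq : (g.rootSet E).ncard = Nat.card (AdjoinRoot g →ₐ[K] E) := by
    rw [← Nat.card_coe_set_eq, Nat.card_congr (AdjoinRoot.equiv E K g hg.ne_zero)]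
    exact Nat.card_congr (Equiv.subtypeEquivRight fun x ↦ by simp [rootSet_def])
  rw [ncard_eq, ← finrank_eq]
  split_ifs with h
  · exact FiniteField.natCard_algHom_of_finrank_dvd h
  · rw [← FiniteField.nonempty_algHom_iff_finrank_dvd, not_nonempty_iff] at h
    exact Nat.card_of_isEmpty

theorem ncard_rootSet_eq_sum_divisors [Finite E] [DecidableEq K] {f : K[X]} (hf : f ≠ 0) :
    (f.rootSet E).ncard = ∑ e ∈ (Module.finrank K E).divisors,
      e * ((primeFactors f).filter fun g ↦ g.natDegree = e).card := by
  have finrank_ne_zero : Module.finrank K E ≠ 0 := Module.finrank_pos.ne'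
  rw [ncard_rootSet_eq_sum_primeFactors hf, ← sum_ite_dvd_eq_sum_divisors_mul_card _ _
    finrank_ne_zero]
  exact Finset.sum_congr rfl fun g hg ↦
    ncard_rootSet_of_irreducible (irreducible_of_normalized_factor g (mem_primeFactors.1 hg))

theorem mul_card_primeFactors_eq_moebius_sum [DecidableEq K] {f : K[X]} (hf : f ≠ 0) {n : ℕ}
    (hn : 0 < n) (L : ℕ → Type*) [∀ d, Field (L d)] [∀ d, Algebra K (L d)]
    (hfin : ∀ d, d ∣ n → Finite (L d)) (hL : ∀ d, d ∣ n → Module.finrank K (L d) = d) :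
    (n : ℤ) * ((primeFactors f).filter fun g ↦ g.natDegree = n).card =
      ∑ d ∈ n.divisors, ArithmeticFunction.moebius (n / d) * ((f.rootSet (L d)).ncard : ℤ) := by
  have root_count (d : ℕ) (_ : 0 < d) (hd : d ∣ n) :
      ∑ e ∈ d.divisors, (e : ℤ) * ((primeFactors f).filter fun g ↦ g.natDegree = e).card =
        (f.rootSet (L d)).ncard := by
    have := hfin d hd
    rw [ncard_rootSet_eq_sum_divisors hf, hL d hd]
    push_cast
    rfl
  have inversion := (ArithmeticFunction.sum_eq_iff_sum_mul_moebius_eq_on {d | d ∣ n}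
    fun _ _ ↦ dvd_trans).1 root_count n hn dvd_rfl
  simpa only [Int.cast_id, Nat.sum_divisorsAntidiagonal'
    fun c d ↦ ArithmeticFunction.moebius c * ((f.rootSet (L d)).ncard : ℤ)] using inversion.symm

end RootCount

theorem mul_card_factors_modEq_moebius_sum_general
    {K : Type*} [Field K] [Finite K] [DecidableEq K] (hchar : Odd (ringChar K))
    {f : K[X]} (hf : f ≠ 0) {n : ℕ} (hn : 0 < n)
    (L : ℕ → Type*) [∀ d, Field (L d)] [∀ d, Algebra K (L d)]
    (hL : ∀ d, d ∣ n → Module.finrank K (L d) = d) :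
    (n : ℤ) * (((primeFactors f).filter fun g ↦ g.natDegree = n).card : ℤ) ≡
      ∑ d ∈ n.divisors, ArithmeticFunction.moebius (n / d) *
        (Nat.card {p : L d × L d // p.2 ^ 2 = aeval p.1 f} : ℤ) [ZMOD 2] := by
  have ringChar_ne_two : ringChar K ≠ 2 := fun h ↦ absurd (h ▸ hchar) (by decide)
  have finite_of_dvd (d : ℕ) (hd : d ∣ n) : Finite (L d) :=
    have := Module.finite_of_finrank_pos ((hL d hd).symm ▸ Nat.pos_of_dvd_of_pos hd hn)
    Module.finite_of_finite K
  rw [mul_card_primeFactors_eq_moebius_sum hf hn L finite_of_dvd hL]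
  refine Int.ModEq.sum fun d hd ↦ .mul_left _ ?_
  have := finite_of_dvd d (Nat.dvd_of_mem_divisors hd)
  exact (Int.natCast_modEq_iff.2 <| card_sq_eq_aeval_modEq_ncard_rootSet ringChar_ne_two hf).symm

/-- Let `K` be a finite field of odd characteristic, `f ∈ K[X]` squarefree, `n ≥ 1`, and
for each divisor `d` of `n` let `L d` be an extension of `K` of degree `d`. Then `n` times
the number of monic irreducible factors of `f` of degree exactly `n` is congruent mod 2 to
`∑_{d ∣ n} μ(n/d) ⬝ N_f(L d)`, where `N_f(E)` is the number of pairs `(x, y) ∈ E × E` with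
`y² = f(x)`. -/
theorem mul_card_factors_modEq_moebius_sum
    (K : Type*) [Field K] [Fintype K] [DecidableEq K] (hchar : Odd (ringChar K))
    (f : Polynomial K) (hf : Squarefree f) (n : ℕ) (hn : 0 < n)
    (L : ℕ → Type*) [∀ d, Field (L d)] [∀ d, Algebra K (L d)]
    (hL : ∀ d, d ∣ n → Module.finrank K (L d) = d) :
    (n : ℤ) * (((normalizedFactors f).filter fun g => g.natDegree = n).card : ℤ) ≡
      ∑ d ∈ n.divisors, (ArithmeticFunction.moebius (n / d) : ℤ) *
        (Nat.card {p : L d × L d // p.2 ^ 2 = Polynomial.aeval p.1 f} : ℤ) [ZMOD 2] := by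
  rw [← primeFactors_val_eq_normalizedFactors hf.isRadical]
  exact mul_card_factors_modEq_moebius_sum_general hchar hf.ne_zero hn L hL
end

section
/- Let K be a finite field of odd characteristic, let f ∈ K[X] be a squarefree polynomial of degree 8, let L₃ be a field extension of K with [L₃ : K] = 3, and let L₅ be a field extension of K with [L₅ : K] = 5. Then it is not the case that N_f(K) is even, N_f(L₃) is odd, and N_f(L₅) is even, where N_f(E) denotes the number of pairs (x, y) ∈ E × E with y² = f(x). -/
/-! Since `(x, y) ↦ (x, -y)` fixes exactly the points with `y = 0`, the parity of `N_f(E)` is that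
of the number of roots of `f` in `E`. Let `c k` be the number of irreducible factors of `f` over `K`
of degree `k`. Such a factor has `k` roots in `E` if `k ∣ [E : K]` and none otherwise, so the three
parities are those of `c 1`, `c 1 + 3 * c 3` and `c 1 + 5 * c 5`. For the pattern (even, odd, even),
`c 3` is odd while `c 1` and `c 5` are even. As `f` has even degree, it has an even number of
factors of odd degree, so besides a cubic factor it has one of odd degree at least `7`, which is
impossible for degree less than `10`. -/

open Polynomial UniqueFactorizationMonoid

lemma card_sq_eq_modEq_card_zeros {X R : Type*} [Finite X] [Ring R] [NoZeroDivisors R]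
    [Nontrivial R] [Finite R] (hR : ringChar R ≠ 2) (g : X → R) :
    Nat.card {p : X × R // p.2 ^ 2 = g p.1} ≡ Nat.card {x // g x = 0} [MOD 2] := by
  classical
  let S := {p : X × R // p.2 ^ 2 = g p.1}
  let σ : Function.End S := fun p ↦ ⟨(p.1.1, -p.1.2), by simpa using p.2⟩
  have hσ : σ ^ 2 ^ 1 = 1 := funext fun p ↦ Subtype.ext <| Prod.ext rfl (neg_neg p.1.2)
  have mem_fixed (p : S) : p ∈ Function.fixedPoints σ ↔ p.1.2 = 0 := by
    rw [← Ring.eq_self_iff_eq_zero_of_char_ne_two hR]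
    exact Subtype.ext_iff.trans (Prod.ext_iff.trans (and_iff_right rfl))
  let e : Function.fixedPoints σ ≃ {x // g x = 0} :=
    { toFun := fun p ↦ ⟨p.1.1.1, by rw [← p.1.2, (mem_fixed p.1).1 p.2, sq, mul_zero]⟩
      invFun := fun x ↦ ⟨⟨(x, 0), by rw [x.2, sq, mul_zero]⟩, (mem_fixed _).2 rfl⟩
      left_inv := fun p ↦ Subtype.ext <| Subtype.ext <| Prod.ext rfl ((mem_fixed p.1).1 p.2).symm
      right_inv := fun _ ↦ rfl }
  have := Fintype.ofFinite S
  rw [← Nat.card_congr e, Nat.card_eq_fintype_card, Nat.card_eq_fintype_card]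
  exact Equiv.Perm.card_fixedPoints_modEq hσ

section Multiset

lemma sum_filter_eq_sum_map_ite {M : Type*} [AddCommMonoid M] (s : Multiset M) (p : M → Prop)
    [DecidablePred p] : (s.filter p).sum = (s.map fun a ↦ if p a then a else 0).sum := by
  induction s using Multiset.induction_on with
  | empty => simp
  | cons a s ih => by_cases h : p a <;> simp [h, ih]

variable (s : Multiset ℕ)

lemma sum_filter_dvd_one : (s.filter (· ∣ 1)).sum = s.count 1 := by
  simp [Nat.dvd_one, Multiset.filter_eq']

lemma sum_filter_dvd_prime {p : ℕ} (hp : p.Prime) :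
    (s.filter (· ∣ p)).sum = s.count 1 + s.count p * p := by
  have hdisj : s.filter (fun k ↦ k = 1 ∧ k = p) = 0 :=
    Multiset.filter_eq_nil.mpr fun k _ hk ↦ hp.ne_one (hk.2.symm.trans hk.1)
  have hsplit := Multiset.filter_add_filter (· = 1) (· = p) s
  rw [hdisj, add_zero] at hsplit
  simp [Nat.dvd_prime hp, ← hsplit, Multiset.filter_eq']

variable {s}

lemma ten_le_sum_of_parity_count (hs : Even s.sum) (h1 : Even (s.count 1)) (h3 : Odd (s.count 3))
    (h5 : Even (s.count 5)) : 10 ≤ s.sum := by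
  by_contra! hlt
  have hrange : s.toFinset ⊆ Finset.range 10 := fun k hk ↦ Finset.mem_range.mpr <|
    (Multiset.le_sum_of_mem (Multiset.mem_toFinset.mp hk)).trans_lt hlt
  have hsum := Finset.sum_multiset_count_of_subset s _ hrange
  simp only [Finset.sum_range_succ, Finset.sum_range_zero, smul_eq_mul] at hsum
  have h79 : Odd (s.count 7 + s.count 9) := by grind
  have h3_pos := h3.pos
  have h79_pos := h79.pos
  omega

end Multiset

section Factors

lemma zero_notMem_factors {R : Type*} [CommMonoidWithZero R] [UniqueFactorizationMonoid R]
    (a : R) : (0 : R) ∉ factors a :=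
  fun h ↦ (irreducible_of_factor 0 h).ne_zero rfl

variable {K : Type*} [Field K]

/-- The degrees of the irreducible factors of `f` over `K`, with multiplicity; empty for `f = 0`. -/
noncomputable def factorDegrees (f : K[X]) : Multiset ℕ :=
  (factors f).map natDegree

lemma sum_factorDegrees {f : K[X]} (hf : f ≠ 0) : (factorDegrees f).sum = f.natDegree := by
  rw [factorDegrees, ← natDegree_multiset_prod _ (zero_notMem_factors f)]
  exact natDegree_eq_of_degree_eq (degree_eq_degree_of_associated (factors_prod hf))

variable {E : Type*} [Field E] [Algebra K E]

lemma aroots_eq_bind_factors {f : K[X]} (hf : f ≠ 0) :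
    f.aroots E = (factors f).bind fun p ↦ p.aroots E := by
  have h0 : (0 : E[X]) ∉ (factors f).map (Polynomial.map (algebraMap K E)) := by
    simpa [Polynomial.map_eq_zero] using zero_notMem_factors f
  have hassoc := (factors_prod hf).map (mapRingHom (algebraMap K E))
  rw [coe_mapRingHom, Polynomial.map_multiset_prod] at hassoc
  rw [aroots_def, ← hassoc.roots_eq, roots_multiset_prod _ h0, Multiset.bind_map]

lemma card_zeros_eq_card_aroots [PerfectField K] {f : K[X]} (hf : Squarefree f) :
    Nat.card {x : E // aeval x f = 0} = (f.aroots E).card := by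
  classical
  have hnodup : (f.aroots E).Nodup := nodup_roots (PerfectField.separable_iff_squarefree.mpr hf).map
  rw [← Multiset.toFinset_card_of_nodup hnodup]
  exact Nat.subtype_card _ fun x ↦ by simp [hf.ne_zero]

lemma natDegree_dvd_finrank_of_aeval_eq_zero {p : K[X]} (hp : Irreducible p) {x : E}
    (hx : aeval x p = 0) : p.natDegree ∣ Module.finrank K E := by
  rw [minpoly.Irreducible.eq_minpoly hp hx,
    natDegree_C_mul (leadingCoeff_ne_zero.mpr hp.ne_zero)]
  exact minpoly.degree_dvd (isAlgebraic_iff_isIntegral.mp ⟨p, hp.ne_zero, hx⟩)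

variable [FiniteDimensional K E] [Finite K]

lemma splits_map_of_natDegree_dvd_finrank {p : K[X]} (hp : Irreducible p)
    (hdvd : p.natDegree ∣ Module.finrank K E) : (p.map (algebraMap K E)).Splits := by
  have : Finite E := Module.finite_of_finite K
  have hp_dvd : p ∣ X ^ Nat.card E - X := by
    rw [Module.natCard_eq_pow_finrank (K := K) (V := E)]
    exact hp.natDegree_dvd_iff_dvd_X_pow_card_pow_sub_X.mp hdvd
  refine (splits_X_pow_nat_card_sub_X (K := E)).of_dvd
    (FiniteField.X_pow_card_sub_X_ne_zero _ Finite.one_lt_card) ?_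
  simpa using Polynomial.map_dvd (algebraMap K E) hp_dvd

lemma card_aroots_of_irreducible {p : K[X]} (hp : Irreducible p) :
    (p.aroots E).card = if p.natDegree ∣ Module.finrank K E then p.natDegree else 0 := by
  split_ifs with h
  · rw [aroots_def, ← (splits_map_of_natDegree_dvd_finrank hp h).natDegree_eq_card_roots,
      natDegree_map]
  · refine Multiset.card_eq_zero.mpr (Multiset.eq_zero_of_forall_notMem fun x hx ↦ h ?_)
    exact natDegree_dvd_finrank_of_aeval_eq_zero hp (mem_aroots.mp hx).2

lemma card_aroots {f : K[X]} (hf : f ≠ 0) :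
    (f.aroots E).card = ((factorDegrees f).filter (· ∣ Module.finrank K E)).sum := by
  rw [aroots_eq_bind_factors hf, Multiset.card_bind, factorDegrees, sum_filter_eq_sum_map_ite,
    Multiset.map_map]
  exact congrArg Multiset.sum <| Multiset.map_congr rfl fun p hp ↦
    card_aroots_of_irreducible (irreducible_of_factor p hp)

lemma even_card_points_iff (hchar : ringChar K ≠ 2) {f : K[X]} (hf : Squarefree f) :
    Even (Nat.card {p : E × E // p.2 ^ 2 = aeval p.1 f}) ↔
      Even ((factorDegrees f).filter (· ∣ Module.finrank K E)).sum := by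
  have : Finite E := Module.finite_of_finite K
  rw [Algebra.ringChar_eq K E] at hchar
  rw [← card_aroots hf.ne_zero, ← card_zeros_eq_card_aroots hf, Nat.even_iff, Nat.even_iff,
    card_sq_eq_modEq_card_zeros hchar fun x : E ↦ aeval x f]

end Factors

theorem no_genus_three_parities_general
    {K : Type*} [Field K] [Finite K] (hchar : ringChar K ≠ 2)
    {f : K[X]} (hf : Squarefree f) (heven : Even f.natDegree) (hdeg : f.natDegree < 10)
    {L₃ : Type*} [Field L₃] [Algebra K L₃] (hL₃ : Module.finrank K L₃ = 3)
    {L₅ : Type*} [Field L₅] [Algebra K L₅] (hL₅ : Module.finrank K L₅ = 5) :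
    ¬(Even (Nat.card {p : K × K // p.2 ^ 2 = eval p.1 f}) ∧
      Odd (Nat.card {p : L₃ × L₃ // p.2 ^ 2 = aeval p.1 f}) ∧
      Even (Nat.card {p : L₅ × L₅ // p.2 ^ 2 = aeval p.1 f})) := by
  rintro ⟨h1, h3, h5⟩
  have : FiniteDimensional K L₃ := Module.finite_of_finrank_pos (by omega)
  have : FiniteDimensional K L₅ := Module.finite_of_finrank_pos (by omega)
  simp only [← coe_aeval_eq_eval] at h1
  rw [even_card_points_iff hchar hf, Module.finrank_self, sum_filter_dvd_one] at h1
  rw [← Nat.not_even_iff_odd, even_card_points_iff hchar hf, hL₃,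
    sum_filter_dvd_prime _ Nat.prime_three, Nat.not_even_iff_odd] at h3
  rw [even_card_points_iff hchar hf, hL₅, sum_filter_dvd_prime _ Nat.prime_five] at h5
  have hc3 : Odd ((factorDegrees f).count 3) := Nat.Odd.of_mul_left ((Nat.odd_add'.mp h3).mpr h1)
  have hc5 : Even ((factorDegrees f).count 5) := by
    simpa [h1, Nat.even_add, Nat.even_mul, show ¬Even 5 by decide] using h5
  have := ten_le_sum_of_parity_count (sum_factorDegrees hf.ne_zero ▸ heven) h1 hc3 hc5
  rw [sum_factorDegrees hf.ne_zero] at this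
  omega

/-- Let `K` be a finite field of odd characteristic, `f ∈ K[X]` squarefree of degree 8,
and `L₃`, `L₅` extensions of `K` of degrees 3 and 5 respectively. Writing `N_f(E)` for the
number of pairs `(x, y) ∈ E × E` with `y² = f(x)`, it is impossible that `N_f(K)` is even,
`N_f(L₃)` is odd and `N_f(L₅)` is even. -/
theorem no_genus_three_parities
    (K : Type*) [Field K] [Fintype K] (hchar : Odd (ringChar K))
    (f : Polynomial K) (hf : Squarefree f) (hdeg : f.natDegree = 8)
    (L₃ : Type*) [Field L₃] [Algebra K L₃] (hL₃ : Module.finrank K L₃ = 3)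
    (L₅ : Type*) [Field L₅] [Algebra K L₅] (hL₅ : Module.finrank K L₅ = 5) :
    ¬(Even (Nat.card {p : K × K // p.2 ^ 2 = Polynomial.eval p.1 f}) ∧
      Odd (Nat.card {p : L₃ × L₃ // p.2 ^ 2 = Polynomial.aeval p.1 f}) ∧
      Even (Nat.card {p : L₅ × L₅ // p.2 ^ 2 = Polynomial.aeval p.1 f})) :=
  no_genus_three_parities_general (hchar.ne_two_of_dvd_nat dvd_rfl) hf
    (hdeg ▸ by decide) (by omega) hL₃ hL₅
end

section
/- Let q be an odd prime power, let K be a finite field with q elements, let g ≥ 1, and let f ∈ K[X] be a squarefree polynomial of odd degree 2g + 1. Let n = 2^a · m with m odd, and let L be a field extension of K with [L : K] = n. Then N_f(L) ≡ 2·q^n − #{x ∈ L : f(x) = 0} (mod 2^{a+1}), where N_f(L) denotes the number of pairs (x, y) ∈ L × L with y² = f(x). -/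
/-!
Write `c x` for `f(x)`. The fibre of `(x, y) ↦ x` has one point where `c x = 0`, and otherwise two
points or none, so `N_f(L) = 2 |L| - #{x | c x = 0} - 2 #{x | c x is not a square}`, and it suffices
that `2 ^ a` divides the number of `x` at which `c x` is not a square. Since `c` commutes with the
action of `Gal(L/K)`, these `x` are permuted by it. If the stabilizer of `x` has even order and `E`
is its fixed field, then `c x ∈ E` and `[L : E]` is even. As `c x` is a norm from `L` to `E`, it is
a power `w ^ (1 + |E| + ⋯ + |E| ^ ([L : E] - 1))`, whose exponent is even because `|E|` is odd; so
`c x` is a square. Hence the stabilizers of the `x` in question have odd order, and `2 ^ a` divides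
the size of each of their orbits.
-/

theorem dvd_card_of_forall_dvd_index_stabilizer (G : Type*) {X : Type*} [Group G] [MulAction G X]
    [Finite X] {k : ℕ} (h : ∀ x : X, k ∣ (MulAction.stabilizer G x).index) : k ∣ Nat.card X := by
  have := Fintype.ofFinite (MulAction.orbitRel.Quotient G X)
  rw [Nat.card_congr (MulAction.selfEquivSigmaOrbits G X), Nat.card_sigma]
  refine Finset.dvd_sum fun ω _ ↦ ?_
  rw [Nat.card_coe_set_eq, ← MulAction.index_stabilizer]
  exact h ω.out

theorem dvd_card_of_forall_coprime_card_stabilizer (G : Type*) {X : Type*} [Group G]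
    [MulAction G X] [Finite X] {k : ℕ} (hk : k ∣ Nat.card G)
    (h : ∀ x : X, k.Coprime (Nat.card (MulAction.stabilizer G x))) : k ∣ Nat.card X :=
  dvd_card_of_forall_dvd_index_stabilizer G fun x ↦
    (h x).dvd_of_dvd_mul_left <| (MulAction.stabilizer G x).card_mul_index.symm ▸ hk

theorem isSquare_algebraMap_of_even_finrank {E L : Type*} [Field E] [Field L] [Finite L]
    [Algebra E L] (h : Even (Module.finrank E L)) (z : E) : IsSquare (algebraMap E L z) := by
  have : Finite E := .of_injective _ (algebraMap E L).injective
  have := Fintype.ofFinite E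
  by_cases h2 : ringChar E = 2
  · exact (FiniteField.isSquare_of_char_two h2 z).map (algebraMap E L)
  have hE : Odd (Nat.card E) := by
    rw [Nat.card_eq_fintype_card, Nat.odd_iff]
    exact FiniteField.odd_card_of_char_ne_two h2
  have hexp : Even (∑ i ∈ Finset.range (Module.finrank E L), Nat.card E ^ i) := by
    simpa only [Finset.even_sum_iff_even_card_odd, hE.pow, Finset.filter_true, Finset.card_range]
  obtain ⟨w, rfl⟩ := FiniteField.norm_surjective E L z
  rw [FiniteField.algebraMap_norm_eq_pow_sum]
  exact hexp.isSquare_pow w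

section Galois

variable {K L : Type*} [Field K] [Field L] [Finite L] [Algebra K L] (c : L →[Gal(L/K)] L)

open MulAction in
theorem isSquare_map_of_even_card_stabilizer {x : L}
    (h : Even (Nat.card (stabilizer Gal(L/K) x))) : IsSquare (c x) := by
  let E := IntermediateField.fixedField (stabilizer Gal(L/K) x)
  have hE : Even (Module.finrank E L) := by
    rwa [IntermediateField.finrank_fixedField_eq_card]
  have hcx : c x ∈ E := fun σ ↦ calc
    (σ : Gal(L/K)) • c x = c ((σ : Gal(L/K)) • x) := (map_smul c _ x).symm
    _ = c x := congrArg c σ.2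
  exact isSquare_algebraMap_of_even_finrank hE ⟨c x, hcx⟩

theorem two_pow_dvd_card_not_isSquare {a : ℕ} (ha : 2 ^ a ∣ Module.finrank K L) :
    2 ^ a ∣ Nat.card {x : L // ¬ IsSquare (c x)} := by
  let S : SubMulAction Gal(L/K) L :=
    { carrier := {x | ¬ IsSquare (c x)}
      smul_mem' := fun σ x hx hσx ↦ hx <| by
        rw [map_smul] at hσx
        simpa using hσx.map σ.symm }
  have hodd (x : S) : Odd (Nat.card (MulAction.stabilizer Gal(L/K) x)) := by
    rw [SubMulAction.stabilizer_of_subMul, ← Nat.not_even_iff_odd]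
    exact fun h ↦ x.2 (isSquare_map_of_even_card_stabilizer c h)
  rw [← IsGalois.card_aut_eq_finrank] at ha
  exact dvd_card_of_forall_coprime_card_stabilizer (X := S) Gal(L/K) ha fun x ↦
    (Nat.coprime_two_left.mpr (hodd x)).pow_left a

end Galois

theorem card_sqrts_add_ite_add_two_mul_ite {F : Type*} [Field F] [Finite F]
    (h2 : ringChar F ≠ 2) (z : F) [Decidable (z = 0)] [Decidable (IsSquare z)] :
    Nat.card {y : F // y ^ 2 = z} + (if z = 0 then 1 else 0) +
      2 * (if ¬ IsSquare z then 1 else 0) = 2 := by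
  classical
  have := Fintype.ofFinite F
  have hsqrts : (Nat.card {y : F // y ^ 2 = z} : ℤ) = quadraticChar F z + 1 := by
    rw [← quadraticChar_card_sqrts h2, Set.toFinset_card, Nat.card_eq_fintype_card]
    rfl
  zify
  rw [hsqrts, quadraticChar_apply, quadraticCharFun]
  split_ifs <;> simp_all

theorem card_pairs_add_card_zeros_add_two_mul_card_not_isSquare {X F : Type*} [Finite X]
    [Field F] [Finite F] (h2 : ringChar F ≠ 2) (c : X → F) :
    Nat.card {p : X × F // p.2 ^ 2 = c p.1} + Nat.card {x // c x = 0} +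
      2 * Nat.card {x // ¬ IsSquare (c x)} = 2 * Nat.card X := by
  classical
  have := Fintype.ofFinite X
  have hpairs : Nat.card {p : X × F // p.2 ^ 2 = c p.1} = ∑ x, Nat.card {y : F // y ^ 2 = c x} := by
    rw [← Nat.card_sigma]
    exact Nat.card_congr (Equiv.subtypeProdEquivSigmaSubtype fun x y ↦ y ^ 2 = c x)
  have hcount (P : X → Prop) [DecidablePred P] :
      Nat.card {x // P x} = ∑ x, if P x then 1 else 0 := by
    rw [Nat.card_eq_fintype_card, Fintype.card_subtype, Finset.card_filter]
  rw [hpairs, hcount, hcount, Finset.mul_sum, ← Finset.sum_add_distrib, ← Finset.sum_add_distrib]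
  simp only [card_sqrts_add_ite_add_two_mul_ite h2, Finset.sum_const, Finset.card_univ, smul_eq_mul]
  rw [Nat.card_eq_fintype_card, mul_comm]

theorem card_pairs_modEq_two_pow_general {K L : Type*} [Field K] [Finite K]
    (hK : Odd (Nat.card K)) [Field L] [Algebra K L] [FiniteDimensional K L]
    (c : L →[Gal(L/K)] L) {a : ℕ} (ha : 2 ^ a ∣ Module.finrank K L) :
    (Nat.card {p : L × L // p.2 ^ 2 = c p.1} : ℤ) ≡
      2 * (Nat.card K : ℤ) ^ Module.finrank K L - (Nat.card {x : L // c x = 0} : ℤ)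
        [ZMOD 2 ^ (a + 1)] := by
  have : Finite L := Module.finite_of_finite K
  have := Fintype.ofFinite L
  have hL : Nat.card L = Nat.card K ^ Module.finrank K L := Module.natCard_eq_pow_finrank
  have h2 : ringChar L ≠ 2 := by
    rw [Ne, FiniteField.even_card_iff_char_two, ← Nat.even_iff, Nat.not_even_iff_odd,
      ← Nat.card_eq_fintype_card, hL]
    exact hK.pow
  have hcount := card_pairs_add_card_zeros_add_two_mul_card_not_isSquare h2 c
  obtain ⟨t, ht⟩ := two_pow_dvd_card_not_isSquare c ha
  rw [ht, hL] at hcount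
  refine Int.modEq_iff_dvd.mpr ⟨t, ?_⟩
  zify at hcount
  linear_combination -hcount

/-- Let `q` be an odd prime power, `K` a finite field with `q` elements, `g ≥ 1`, and
`f ∈ K[X]` squarefree of odd degree `2g + 1`. Let `n = 2^a ⬝ m` with `m` odd and let
`L/K` be an extension of degree `n`. Then `N_f(L) ≡ 2q^n − #{x ∈ L : f(x) = 0}`
modulo `2^(a+1)`, where `N_f(L)` is the number of pairs `(x, y) ∈ L × L` with
`y² = f(x)`. -/
theorem card_pairs_modEq_two_pow
    (q : ℕ) (hq : IsPrimePow q) (hqodd : Odd q)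
    (K : Type*) [Field K] [Fintype K] (hK : Fintype.card K = q)
    (g : ℕ) (hg : 1 ≤ g) (f : Polynomial K) (hf : Squarefree f)
    (hdeg : f.natDegree = 2 * g + 1)
    (a m : ℕ) (hm : Odd m)
    (L : Type*) [Field L] [Algebra K L] (hL : Module.finrank K L = 2 ^ a * m) :
    (Nat.card {p : L × L // p.2 ^ 2 = Polynomial.aeval p.1 f} : ℤ) ≡
      2 * (q : ℤ) ^ (2 ^ a * m) -
        (Nat.card {x : L // Polynomial.aeval x f = 0} : ℤ) [ZMOD 2 ^ (a + 1)] := by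
  have : FiniteDimensional K L := .of_finrank_pos (hL ▸ Nat.mul_pos (by positivity) hm.pos)
  rw [← Nat.card_eq_fintype_card] at hK
  rw [← hK, ← hL]
  exact card_pairs_modEq_two_pow_general (hK ▸ hqodd)
    ⟨fun x ↦ f.aeval x, fun σ x ↦ Polynomial.aeval_algHom_apply σ x f⟩ ⟨m, hL⟩
end

section
/- Let q be an odd prime power, let K be a finite field with q elements, and let f ∈ K[X] be a squarefree polynomial of degree 7. Let L₃ be a field extension of K with [L₃ : K] = 3, and for each m ≥ 1 let L^{(m)} be a field extension of K with [L^{(m)} : K] = 2^m. If N_f(K) is even and N_f(L₃) is odd, then for every m ≥ 1 one has N_f(L^{(m)}) ≡ 2^{m+1} − 2 (mod 2^{m+1}), where N_f(E) denotes the number of pairs (x, y) ∈ E × E with y² = f(x). -/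
/-!
Counting square roots fibre by fibre, `N_f(E) + r(E) + 2 n(E) = 2 |E|`, where `r(E)` is the number
of roots of `f` in `E` and `n(E)` is the number of `x : E` such that `f(x)` is not a square in `E`.
If `[E : K] = 2 ^ m`, Frobenius acts on these `x` with all orbits of length `2 ^ m`, since a shorter
orbit lies in the subfield of index 2, on which `f` takes values that are squares in `E`. As
`|E| ≡ 1 (mod 2 ^ m)`, this gives `N_f(E) + r(E) ≡ 2 (mod 2 ^ (m + 1))`.

It remains to show `r(E) ≡ 4 (mod 2 ^ (m + 1))` for `m ≥ 1`. Since `N_f` and `r` have the same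
parity, the hypotheses say that Frobenius has an odd number of points of exact period 3 among the 7
geometric roots, hence exactly one 3-cycle. The other 4 roots are permuted without 3-cycles, so
their periods divide 4: `r = 4` for `m ≥ 2`, and for `m = 1` only 4-cycles are lost.
-/

open Function Polynomial Set

theorem pow_two_pow_modEq_one {q : ℕ} (hq : Odd q) (m : ℕ) : q ^ 2 ^ m ≡ 1 [MOD 2 ^ m] := by
  obtain _ | k := m
  · exact Nat.modEq_one
  have euler := Nat.ModEq.pow_totient (hq.coprime_two_right.pow_right (k + 1))
  rw [Nat.totient_prime_pow_succ Nat.prime_two] at euler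
  simpa [pow_succ, pow_mul] using euler.pow 2

section PeriodicPoints

variable {α : Type*} {φ : α → α} {s : Set α}

theorem minimalPeriod_restrict (hφ : MapsTo φ s s) (x : s) :
    minimalPeriod (hφ.restrict φ s s) x = minimalPeriod φ x := by
  refine minimalPeriod_eq_minimalPeriod_iff.2 fun n ↦ ?_
  rw [IsPeriodicPt, IsFixedPt, Subtype.ext_iff, hφ.coe_iterate_restrict]
  rfl

theorem dvd_natCard_of_forall_minimalPeriod_eq [Finite α] {d : ℕ} (hφ : Injective φ)
    (hd : ∀ x, minimalPeriod φ x = d) : d ∣ Nat.card α := by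
  have := Fintype.ofFinite α
  classical
  let σ : Equiv.Perm α := .ofBijective φ (Finite.injective_iff_bijective.1 hφ)
  have card_orbit (x : α) : Nat.card (MulAction.orbit (Subgroup.zpowers σ) x) = d := by
    rw [Nat.card_eq_fintype_card, ← MulAction.minimalPeriod_eq_card]
    exact hd x
  rw [Nat.card_congr (MulAction.selfEquivSigmaOrbits (Subgroup.zpowers σ) α), Nat.card_sigma]
  exact Finset.dvd_sum fun ω _ ↦ (card_orbit _).symm.dvd

theorem dvd_ncard_of_forall_minimalPeriod_eq {d : ℕ} (hs : s.Finite) (hφ : MapsTo φ s s)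
    (hinj : InjOn φ s) (hd : ∀ x ∈ s, minimalPeriod φ x = d) : d ∣ s.ncard := by
  have := hs.to_subtype
  refine dvd_natCard_of_forall_minimalPeriod_eq (hφ.restrict_inj.2 hinj) fun x ↦ ?_
  rw [minimalPeriod_restrict, hd x x.2]

theorem minimalPeriod_pos_of_injOn (hs : s.Finite) (hφ : MapsTo φ s s) (hinj : InjOn φ s)
    {x : α} (hx : x ∈ s) : 0 < minimalPeriod φ x := by
  have := hs.to_subtype
  rw [← minimalPeriod_restrict hφ ⟨x, hx⟩]
  exact minimalPeriod_pos_of_mem_periodicPts ((hφ.restrict_inj.2 hinj).mem_periodicPts _)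

theorem minimalPeriod_apply_of_injOn (hs : s.Finite) (hφ : MapsTo φ s s) (hinj : InjOn φ s)
    {x : α} (hx : x ∈ s) : minimalPeriod φ (φ x) = minimalPeriod φ x :=
  minimalPeriod_apply (minimalPeriod_pos_iff_mem_periodicPts.1
    (minimalPeriod_pos_of_injOn hs hφ hinj hx))

theorem dvd_ncard_minimalPeriod_eq (hs : s.Finite) (hφ : MapsTo φ s s) (hinj : InjOn φ s)
    (d : ℕ) : d ∣ {x ∈ s | minimalPeriod φ x = d}.ncard :=
  dvd_ncard_of_forall_minimalPeriod_eq (hs.sep _)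
    (fun _ hx ↦ ⟨hφ hx.1, (minimalPeriod_apply_of_injOn hs hφ hinj hx.1).trans hx.2⟩)
    (hinj.mono (sep_subset _ _)) fun _ hx ↦ hx.2

theorem mapsTo_sdiff_minimalPeriod_eq (hs : s.Finite) (hφ : MapsTo φ s s) (hinj : InjOn φ s)
    (d : ℕ) :
    MapsTo φ (s \ {x ∈ s | minimalPeriod φ x = d}) (s \ {x ∈ s | minimalPeriod φ x = d}) :=
  fun _ hx ↦ ⟨hφ hx.1, fun h ↦
    hx.2 ⟨hx.1, (minimalPeriod_apply_of_injOn hs hφ hinj hx.1).symm.trans h.2⟩⟩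

theorem minimalPeriod_le_ncard (hs : s.Finite) (hφ : MapsTo φ s s) {x : α} (hx : x ∈ s) :
    minimalPeriod φ x ≤ s.ncard := by
  have := hs.fintype
  rw [← minimalPeriod_restrict hφ ⟨x, hx⟩, ← Nat.card_coe_set_eq, Nat.card_eq_fintype_card]
  exact minimalPeriod_le_card

theorem ncard_isPeriodicPt_prime_pow_succ (hs : s.Finite) (p k : ℕ) [Fact p.Prime] :
    {x ∈ s | IsPeriodicPt φ (p ^ (k + 1)) x}.ncard =
      {x ∈ s | IsPeriodicPt φ (p ^ k) x}.ncard +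
        {x ∈ s | minimalPeriod φ x = p ^ (k + 1)}.ncard := by
  rw [← ncard_union_eq _ (hs.sep _) (hs.sep _)]
  · congr 1
    ext x
    have hp : p.Prime := Fact.out
    simp only [isPeriodicPt_iff_minimalPeriod_dvd, mem_union, mem_ofPred_eq, ← and_or_left,
      Nat.dvd_prime_pow hp, Nat.le_succ_iff, or_and_right, exists_or, exists_eq_left]
  · rw [disjoint_left]
    rintro x ⟨-, hx⟩ ⟨-, hx'⟩
    have hp : p.Prime := Fact.out
    rw [isPeriodicPt_iff_minimalPeriod_dvd, hx', Nat.pow_dvd_pow_iff_le_right hp.one_lt] at hx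
    omega

theorem ncard_minimalPeriod_eq_three (hs : s.Finite) (hlt : s.ncard < 9) (hφ : MapsTo φ s s)
    (hinj : InjOn φ s)
    (hodd : Odd ({x ∈ s | IsPeriodicPt φ 1 x}.ncard + {x ∈ s | IsPeriodicPt φ 3 x}.ncard)) :
    {x ∈ s | minimalPeriod φ x = 3}.ncard = 3 := by
  have hdvd := dvd_ncard_minimalPeriod_eq hs hφ hinj 3
  have hsum : {x ∈ s | IsPeriodicPt φ 3 x}.ncard =
      {x ∈ s | IsPeriodicPt φ 1 x}.ncard + {x ∈ s | minimalPeriod φ x = 3}.ncard :=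
    ncard_isPeriodicPt_prime_pow_succ hs 3 0
  have hle : {x ∈ s | minimalPeriod φ x = 3}.ncard ≤ s.ncard :=
    ncard_le_ncard (sep_subset _ _) hs
  rw [hsum, Nat.odd_iff] at hodd
  omega

theorem ncard_isPeriodicPt_two_pow_modEq_four (hs : s.ncard = 7) (hφ : MapsTo φ s s)
    (hinj : InjOn φ s)
    (hodd : Odd ({x ∈ s | IsPeriodicPt φ 1 x}.ncard + {x ∈ s | IsPeriodicPt φ 3 x}.ncard))
    {m : ℕ} (hm : 1 ≤ m) :
    {x ∈ s | IsPeriodicPt φ (2 ^ m) x}.ncard ≡ 4 [MOD 2 ^ (m + 1)] := by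
  have hfin : s.Finite := finite_of_ncard_ne_zero (by omega)
  set A := {x ∈ s | minimalPeriod φ x = 3}
  have card_A : A.ncard = 3 := ncard_minimalPeriod_eq_three hfin (by omega) hφ hinj hodd
  have card_B : (s \ A).ncard = 4 := by
    rw [ncard_sdiff (sep_subset _ _) (hfin.sep _), hs, card_A]
  have hB : MapsTo φ (s \ A) (s \ A) := mapsTo_sdiff_minimalPeriod_eq hfin hφ hinj 3
  have dvd_four {x : α} (hx : x ∈ s \ A) : minimalPeriod φ x ∣ 4 := by
    have hpos := minimalPeriod_pos_of_injOn hfin hφ hinj hx.1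
    have hle := minimalPeriod_le_ncard hfin.sdiff hB hx
    have hne : minimalPeriod φ x ≠ 3 := fun h ↦ hx.2 ⟨hx.1, h⟩
    have small_dvd_four : ∀ d ≤ 4, 0 < d → d ≠ 3 → d ∣ 4 := by decide
    exact small_dvd_four _ (card_B ▸ hle) hpos hne
  have periodic_eq {n : ℕ} (hn : 2 ≤ n) : {x ∈ s | IsPeriodicPt φ (2 ^ n) x} = s \ A := by
    ext x
    rw [mem_ofPred_eq, isPeriodicPt_iff_minimalPeriod_dvd, mem_sdiff]
    refine and_congr_right fun hx ↦ ⟨fun h hxA ↦ ?_, fun h ↦ ?_⟩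
    · rw [hxA.2] at h
      have := Nat.prime_three.dvd_of_dvd_pow h
      omega
    · exact (dvd_four ⟨hx, h⟩).trans (pow_dvd_pow 2 hn)
  obtain rfl | hm := hm.eq_or_lt
  · have hsum := ncard_isPeriodicPt_prime_pow_succ (φ := φ) hfin 2 1
    have h4 := dvd_ncard_minimalPeriod_eq hfin hφ hinj 4
    rw [periodic_eq le_rfl, card_B] at hsum
    norm_num [Nat.ModEq] at hsum ⊢
    omega
  · rw [periodic_eq hm, card_B]

end PeriodicPoints

section PointCount

variable {K E : Type*} [Field K] [Field E] [Algebra K E]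

/-- The number of affine `E`-points of the curve `y² = f(x)`. -/
noncomputable def affinePointCount (f : K[X]) (E : Type*) [Field E] [Algebra K E] : ℕ :=
  Nat.card {p : E × E // p.2 ^ 2 = aeval p.1 f}

theorem natCard_sqrt_add_ite [Finite E] [DecidableEq E] (hE : ringChar E ≠ 2) (a : E)
    [Decidable (¬IsSquare a)] :
    Nat.card {y : E // y ^ 2 = a} + (if a = 0 then 1 else 0) + 2 * (if ¬IsSquare a then 1 else 0) =
      2 := by
  have := Fintype.ofFinite E
  have card_sqrts := quadraticChar_card_sqrts hE a
  rw [← ncard_eq_toFinset_card', ← Nat.card_coe_set_eq] at card_sqrts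
  change (Nat.card {y : E // y ^ 2 = a} : ℤ) = _ at card_sqrts
  rcases eq_or_ne a 0 with rfl | ha
  · simp
  by_cases hsq : IsSquare a
  · rw [(quadraticChar_one_iff_isSquare ha).2 hsq] at card_sqrts
    simp only [ha, hsq, if_false, not_true]
    omega
  · rw [quadraticChar_neg_one_iff_not_isSquare.2 hsq] at card_sqrts
    simp only [ha, hsq, if_false, not_false_eq_true, if_true]
    omega

theorem natCard_sq_eq_add_ncard_add [Finite E] (hE : ringChar E ≠ 2) (g : E → E) :
    Nat.card {p : E × E // p.2 ^ 2 = g p.1} + {x | g x = 0}.ncard +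
      2 * {x | ¬IsSquare (g x)}.ncard = 2 * Nat.card E := by
  classical
  have := Fintype.ofFinite E
  have fiberwise : {p : E × E // p.2 ^ 2 = g p.1} ≃ Σ x, {y // y ^ 2 = g x} :=
    Equiv.subtypeProdEquivSigmaSubtype fun x y ↦ y ^ 2 = g x
  rw [Nat.card_congr fiberwise, Nat.card_sigma, ncard_eq_toFinset_card', ncard_eq_toFinset_card',
    toFinset_ofPred, toFinset_ofPred, Finset.card_filter, Finset.card_filter, Finset.mul_sum,
    ← Finset.sum_add_distrib, ← Finset.sum_add_distrib,
    Finset.sum_congr rfl fun x _ ↦ natCard_sqrt_add_ite hE (g x), Finset.sum_const, smul_eq_mul,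
    Finset.card_univ, Nat.card_eq_fintype_card, mul_comm]

theorem affinePointCount_add_ncard_rootSet_add [Finite E] (hE : ringChar E ≠ 2) {f : K[X]}
    (hf : f ≠ 0) :
    affinePointCount f E + (f.rootSet E).ncard + 2 * {x : E | ¬IsSquare (aeval x f)}.ncard =
      2 * Nat.card E := by
  have hroots : f.rootSet E = {x | aeval x f = 0} := Set.ext fun x ↦ mem_rootSet_of_ne hf
  rw [hroots]
  exact natCard_sq_eq_add_ncard_add hE fun x ↦ aeval x f

theorem even_affinePointCount_add_ncard_rootSet [Finite E] (hE : ringChar E ≠ 2) {f : K[X]}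
    (hf : f ≠ 0) : Even (affinePointCount f E + (f.rootSet E).ncard) := by
  have h := affinePointCount_add_ncard_rootSet_add hE hf
  rw [Nat.even_iff]
  omega

end PointCount

section Frobenius

open FiniteField Module

theorem isSquare_of_pow_eq_self {E : Type*} [Field E] [Finite E] {Q : ℕ} (hQ : Nat.card E = Q ^ 2)
    {z : E} (hz : z ^ Q = z) : IsSquare z := by
  have := Fintype.ofFinite E
  by_cases hE : ringChar E = 2
  · exact FiniteField.isSquare_of_char_two hE z
  rcases eq_or_ne z 0 with rfl | hz0
  · exact IsSquare.zero
  have hodd : Odd (Q ^ 2) := by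
    rw [← hQ, Nat.card_eq_fintype_card, Nat.odd_iff]
    exact odd_card_of_char_ne_two hE
  obtain ⟨k, rfl⟩ := (Nat.odd_pow_iff two_ne_zero).1 hodd
  have half_card : Fintype.card E / 2 = 2 * k * (k + 1) := by
    rw [← Nat.card_eq_fintype_card, hQ, show (2 * k + 1) ^ 2 = 2 * (2 * k * (k + 1)) + 1 by ring]
    omega
  have hz1 : z ^ (2 * k) = 1 := mul_right_cancel₀ hz0 (by rw [← pow_succ, hz, one_mul])
  rw [FiniteField.isSquare_iff hE hz0, half_card, pow_mul, hz1, one_pow]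

variable {K E : Type*} [Field K] [Field E] [Algebra K E]

section FixedPoints

variable [Fintype K]

theorem isPeriodicPt_frobeniusAlgHom_iff {n : ℕ} {x : E} :
    IsPeriodicPt (frobeniusAlgHom K E) n x ↔ x ^ Nat.card K ^ n = x := by
  rw [IsPeriodicPt, IsFixedPt, coe_frobeniusAlgHom, pow_iterate, Nat.card_eq_fintype_card]

theorem isPeriodicPt_frobeniusAlgHom_finrank [Finite E] (x : E) :
    IsPeriodicPt (frobeniusAlgHom K E) (finrank K E) x := by
  have := Fintype.ofFinite E
  rw [isPeriodicPt_frobeniusAlgHom_iff, ← natCard_eq_pow_finrank, Nat.card_eq_fintype_card,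
    FiniteField.pow_card]

theorem range_algHom_eq_ptsOfPeriod_frobeniusAlgHom [Finite E] {Ω : Type*} [Field Ω] [Algebra K Ω]
    (i : E →ₐ[K] Ω) : range i = ptsOfPeriod (frobeniusAlgHom K Ω) (finrank K E) := by
  have := Fintype.ofFinite E
  have hne : (X ^ Fintype.card E - X : K[X]) ≠ 0 :=
    X_pow_card_sub_X_ne_zero K Fintype.one_lt_card
  have rootSet_eq_univ : (X ^ Fintype.card E - X : K[X]).rootSet E = univ :=
    eq_univ_of_forall fun x ↦ by simp [mem_rootSet, hne, FiniteField.pow_card]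
  rw [← image_univ, ← rootSet_eq_univ, (isSplittingField_sub E K).splits.image_rootSet i]
  ext x
  rw [mem_ptsOfPeriod, isPeriodicPt_frobeniusAlgHom_iff, ← natCard_eq_pow_finrank,
    Nat.card_eq_fintype_card, mem_rootSet_of_ne hne]
  simp [sub_eq_zero]

theorem ncard_rootSet_eq_ncard_isPeriodicPt [Finite E] (Ω : Type*) [Field Ω] [Algebra K Ω]
    [IsAlgClosed Ω] (f : K[X]) :
    (f.rootSet E).ncard =
      {x ∈ f.rootSet Ω | IsPeriodicPt (frobeniusAlgHom K Ω) (finrank K E) x}.ncard := by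
  let i : E →ₐ[K] Ω := IsAlgClosed.lift
  have preimage_rootSet : i ⁻¹' f.rootSet Ω = f.rootSet E := by
    ext x
    simp only [mem_preimage, mem_rootSet, aeval_algHom_apply, map_eq_zero]
  rw [← ncard_image_of_injective (f := i) _ i.injective, ← preimage_rootSet,
    image_preimage_eq_inter_range, range_algHom_eq_ptsOfPeriod_frobeniusAlgHom]
  rfl

theorem isSquare_of_isPeriodicPt_frobeniusAlgHom [Finite E] {n : ℕ} (hn : finrank K E = n * 2)
    {z : E} (hz : IsPeriodicPt (frobeniusAlgHom K E) n z) : IsSquare z := by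
  refine isSquare_of_pow_eq_self ?_ (isPeriodicPt_frobeniusAlgHom_iff.1 hz)
  rw [natCard_eq_pow_finrank (K := K), hn, pow_mul]

end FixedPoints

theorem two_pow_dvd_ncard_not_isSquare_aeval [Finite E] {m : ℕ} (hm : finrank K E = 2 ^ m)
    (f : K[X]) :
    2 ^ m ∣ {x : E | ¬IsSquare (aeval x f)}.ncard := by
  obtain _ | k := m
  · exact one_dvd _
  have := Finite.of_injective _ (algebraMap K E).injective
  have := Fintype.ofFinite K
  let φ := frobeniusAlgHom K E
  have commute : Semiconj (fun x : E ↦ aeval x f) φ φ := fun x ↦ aeval_algHom_apply φ x f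
  have isPeriodicPt_all (x : E) : IsPeriodicPt φ (2 ^ (k + 1)) x :=
    hm ▸ isPeriodicPt_frobeniusAlgHom_finrank x
  have period {x : E} (hx : ¬IsSquare (aeval x f)) : minimalPeriod φ x = 2 ^ (k + 1) :=
    minimalPeriod_eq_prime_pow
      (fun h ↦ hx (isSquare_of_isPeriodicPt_frobeniusAlgHom hm (h.map commute)))
      (isPeriodicPt_all x)
  refine dvd_ncard_of_forall_minimalPeriod_eq (toFinite _) (φ := φ) (fun x hx hsq ↦ hx ?_)
    φ.injective.injOn fun x ↦ period
  let σ := frobeniusAlgEquivOfAlgebraic K E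
  have descend : σ.symm (aeval (φ x) f) = aeval x f := σ.symm_apply_eq.2 (commute x)
  exact descend ▸ hsq.map σ.symm

theorem affinePointCount_add_ncard_rootSet_modEq_two [Finite E] (hE : ringChar E ≠ 2)
    {m : ℕ} (hm : finrank K E = 2 ^ m) {f : K[X]} (hf : f ≠ 0) :
    affinePointCount f E + (f.rootSet E).ncard ≡ 2 [MOD 2 ^ (m + 1)] := by
  have hcard : Nat.card E ≡ 1 [MOD 2 ^ m] := by
    rw [natCard_eq_pow_finrank (K := K), hm]
    have := Finite.of_injective _ (algebraMap K E).injective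
    have := Fintype.ofFinite K
    refine pow_two_pow_modEq_one ?_ m
    rw [Nat.card_eq_fintype_card, Nat.odd_iff]
    exact odd_card_of_char_ne_two (Algebra.ringChar_eq K E ▸ hE)
  have hdvd := two_pow_dvd_ncard_not_isSquare_aeval hm f
  have htotal := affinePointCount_add_ncard_rootSet_add hE hf
  rw [pow_succ']
  calc affinePointCount f E + (f.rootSet E).ncard
      ≡ affinePointCount f E + (f.rootSet E).ncard + 2 * {x : E | ¬IsSquare (aeval x f)}.ncard
        [MOD 2 * 2 ^ m] := by
          simpa using (Nat.modEq_zero_iff_dvd.2 (mul_dvd_mul_left 2 hdvd)).symm.add_left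
            (affinePointCount f E + (f.rootSet E).ncard)
    _ = 2 * Nat.card E := htotal
    _ ≡ 2 [MOD 2 * 2 ^ m] := hcard.mul_left' 2

theorem card_pairs_two_power_ext_modEq_general {K L₃ L : Type*} [Field K] [Finite K]
    [Field L₃] [Algebra K L₃] [Field L] [Algebra K L] (hK : ringChar K ≠ 2) {f : K[X]}
    (hf : (f.rootSet (AlgebraicClosure K)).ncard = 7) (hL₃ : finrank K L₃ = 3)
    (hodd : Odd (affinePointCount f K + affinePointCount f L₃))
    {m : ℕ} (hm : 1 ≤ m) (hL : finrank K L = 2 ^ m) :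
    affinePointCount f L ≡ 2 ^ (m + 1) - 2 [MOD 2 ^ (m + 1)] := by
  have := Fintype.ofFinite K
  have : FiniteDimensional K L₃ := finite_of_finrank_pos (by omega)
  have : FiniteDimensional K L := finite_of_finrank_pos (hL ▸ by positivity)
  have : Finite L₃ := finite_of_finite K
  have : Finite L := finite_of_finite K
  have hf0 : f ≠ 0 := by
    rintro rfl
    simp at hf
  have roots_odd : Odd ((f.rootSet K).ncard + (f.rootSet L₃).ncard) := by
    have even_K := even_affinePointCount_add_ncard_rootSet hK hf0
    have even_L₃ := even_affinePointCount_add_ncard_rootSet (Algebra.ringChar_eq K L₃ ▸ hK) hf0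
    rw [Nat.even_iff] at even_K even_L₃
    rw [Nat.odd_iff] at hodd ⊢
    omega
  have roots_L : (f.rootSet L).ncard ≡ 4 [MOD 2 ^ (m + 1)] := by
    rw [ncard_rootSet_eq_ncard_isPeriodicPt (AlgebraicClosure K), hL]
    rw [ncard_rootSet_eq_ncard_isPeriodicPt (AlgebraicClosure K), finrank_self,
      ncard_rootSet_eq_ncard_isPeriodicPt (AlgebraicClosure K), hL₃] at roots_odd
    let φ := frobeniusAlgHom K (AlgebraicClosure K)
    exact ncard_isPeriodicPt_two_pow_modEq_four (φ := φ) hf (rootSet_mapsTo φ)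
      φ.injective.injOn roots_odd hm
  refine Nat.ModEq.add_right_cancel' 4 ?_
  calc affinePointCount f L + 4
      ≡ affinePointCount f L + (f.rootSet L).ncard [MOD 2 ^ (m + 1)] := roots_L.symm.add_left _
    _ ≡ 2 [MOD 2 ^ (m + 1)] :=
      affinePointCount_add_ncard_rootSet_modEq_two (Algebra.ringChar_eq K L ▸ hK) hL hf0
    _ ≡ 2 ^ (m + 1) + 2 [MOD 2 ^ (m + 1)] := by simp [Nat.ModEq]
    _ = 2 ^ (m + 1) - 2 + 4 := by
      have : 2 ^ 1 ≤ 2 ^ (m + 1) := pow_le_pow_right₀ one_le_two (by omega)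
      omega

end Frobenius

/-- Let `q` be an odd prime power, `K` a finite field with `q` elements, and `f ∈ K[X]`
squarefree of degree 7. Let `L₃/K` be an extension of degree 3, and for each `m ≥ 1` let
`L m` be an extension of `K` of degree `2^m`. If `N_f(K)` is even and `N_f(L₃)` is odd,
then `N_f(L m) ≡ 2^(m+1) − 2 (mod 2^(m+1))` for all `m ≥ 1`, where `N_f(E)` is the number
of pairs `(x, y) ∈ E × E` with `y² = f(x)`. -/
theorem card_pairs_two_power_ext_modEq
    (q : ℕ) (hq : IsPrimePow q) (hqodd : Odd q)
    (K : Type*) [Field K] [Fintype K] (hK : Fintype.card K = q)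
    (f : Polynomial K) (hf : Squarefree f) (hdeg : f.natDegree = 7)
    (L₃ : Type*) [Field L₃] [Algebra K L₃] (hL₃ : Module.finrank K L₃ = 3)
    (L : ℕ → Type*) [∀ m, Field (L m)] [∀ m, Algebra K (L m)]
    (hL : ∀ m, 1 ≤ m → Module.finrank K (L m) = 2 ^ m)
    (h0 : Even (Nat.card {p : K × K // p.2 ^ 2 = Polynomial.eval p.1 f}))
    (h3 : Odd (Nat.card {p : L₃ × L₃ // p.2 ^ 2 = Polynomial.aeval p.1 f})) :
    ∀ m, 1 ≤ m →
      Nat.card {p : L m × L m // p.2 ^ 2 = Polynomial.aeval p.1 f} ≡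
        2 ^ (m + 1) - 2 [MOD 2 ^ (m + 1)] := by
  have ringChar_ne_two : ringChar K ≠ 2 := fun h ↦
    Nat.not_even_iff_odd.2 (hK ▸ hqodd) (Nat.even_iff.2 (FiniteField.even_card_iff_char_two.1 h))
  have seven_roots : (f.rootSet (AlgebraicClosure K)).ncard = 7 := by
    rw [← Nat.card_coe_set_eq, Nat.card_eq_fintype_card, card_rootSet_eq_natDegree
      (PerfectField.separable_iff_squarefree.2 hf) (IsAlgClosed.splits _), hdeg]
  have even_K : Even (affinePointCount f K) := by
    simpa only [affinePointCount, coe_aeval_eq_eval] using h0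
  exact fun m hm ↦ card_pairs_two_power_ext_modEq_general ringChar_ne_two seven_roots hL₃
    (even_K.add_odd h3) hm (hL m hm)
end

section
/- Let q be an odd prime power, let K be a finite field with q elements, let f ∈ K[X], let n = 2^a · m with m odd, and let L be a field extension of K with [L : K] = n. Then the number of elements x ∈ L such that f(x) ≠ 0 and f(x) is not a square in L is divisible by 2^a. -/
/-!
Let `p` be a prime with `p ^ a ∣ [L : K]`, and let `H` be a subgroup of order `p ^ a` of
`Gal(L/K)`. The set of `x ∈ L` for which `f(x)` is not a `p`-th power in `L` is stable under `H`,
and `H` acts freely on it: otherwise some such `x`, and hence `f(x)`, is fixed by an automorphism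
of order `p`, so `f(x)` lies in a subfield `F` with `[L : F] = p`. But every element `c` of `F` is a
`p`-th power in `L`, because `X ^ p - c` either has a root in `F` or is irreducible of degree `p`,
and finite fields have only one extension of each degree.
-/

open Polynomial

theorem pow_dvd_natCard_of_forall_orderOf_eq_prime {G X : Type*} [Group G] [Finite G]
    [MulAction G X] {p a : ℕ} (hp : p.Prime) (hG : p ^ a ∣ Nat.card G)
    (hX : ∀ g : G, orderOf g = p → ∀ x : X, g • x ≠ x) : p ^ a ∣ Nat.card X := by
  have : Fact p.Prime := ⟨hp⟩
  obtain ⟨H, hH⟩ := Sylow.exists_subgroup_card_pow_prime p hG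
  have hfree (x : X) : MulAction.stabilizer H x = ⊥ := by
    by_contra hne
    have hnontrivial := (Subgroup.nontrivial_iff_ne_bot _).2 hne
    obtain ⟨k, hk, hcard⟩ :=
      ((IsPGroup.of_card hH).to_subgroup (MulAction.stabilizer H x)).nontrivial_iff_card.1
        hnontrivial
    obtain ⟨g, hg⟩ := exists_prime_orderOf_dvd_card' p (hcard ▸ dvd_pow_self p hk.ne')
    exact hX g (by rw [Subgroup.orderOf_coe, Subgroup.orderOf_coe, hg]) x g.2
  rw [Nat.card_congr (MulAction.selfEquivOrbitsQuotientProd hfree), Nat.card_prod, hH]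
  exact dvd_mul_left _ _

section FiniteField

variable {K L : Type*} [Field K] [Field L] [Algebra K L] [Finite L]

theorem exists_aeval_eq_zero_of_irreducible_of_natDegree_dvd_finrank {g : K[X]}
    (hg : Irreducible g) (hdvd : g.natDegree ∣ Module.finrank K L) : ∃ y : L, aeval y g = 0 := by
  have : Fact (Irreducible g) := ⟨hg⟩
  have hfinrank : Module.finrank K (AdjoinRoot g) = g.natDegree :=
    (AdjoinRoot.powerBasis hg.ne_zero).finrank
  obtain ⟨φ⟩ := FiniteField.nonempty_algHom_of_finrank_dvd (hfinrank ▸ hdvd)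
  use φ (AdjoinRoot.root g)
  rw [aeval_algHom_apply, AdjoinRoot.aeval_eq, AdjoinRoot.mk_self, map_zero]

theorem exists_pow_eq_algebraMap_of_prime_dvd_finrank {p : ℕ} (hp : p.Prime)
    (hdvd : p ∣ Module.finrank K L) (c : K) : ∃ y : L, y ^ p = algebraMap K L c := by
  by_cases hc : ∃ b : K, b ^ p = c
  · obtain ⟨b, rfl⟩ := hc
    exact ⟨algebraMap K L b, (map_pow _ _ _).symm⟩
  · have hirr : Irreducible (X ^ p - C c) :=
      X_pow_sub_C_irreducible_of_prime hp (not_exists.1 hc)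
    obtain ⟨y, hy⟩ := exists_aeval_eq_zero_of_irreducible_of_natDegree_dvd_finrank
      (L := L) hirr (by rwa [natDegree_X_pow_sub_C])
    exact ⟨y, by simpa [sub_eq_zero] using hy⟩

theorem exists_pow_eq_of_fixed_of_prime_dvd_orderOf {p : ℕ} (hp : p.Prime) {σ : Gal(L/K)}
    (hσ : p ∣ orderOf σ) {c : L} (hc : σ c = c) : ∃ y : L, y ^ p = c := by
  let F := IntermediateField.fixedField (Subgroup.zpowers σ)
  have hF : Module.finrank F L = orderOf σ := by
    rw [IntermediateField.finrank_fixedField_eq_card, Nat.card_zpowers]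
  have hcF : c ∈ F := by
    have hle : Subgroup.zpowers σ ≤ MulAction.stabilizer Gal(L/K) c := Subgroup.zpowers_le.2 hc
    exact (IntermediateField.mem_fixedField_iff _ _).2 fun τ hτ ↦ hle hτ
  exact exists_pow_eq_algebraMap_of_prime_dvd_finrank hp (hF ▸ hσ) (⟨c, hcF⟩ : F)

end FiniteField

/-- The elements `x` of `A` over which the curve `y ^ n = f(x)` has no point with coordinates in
`A`, as a set stable under the automorphisms of `A` over `R`. -/
def emptyFiberLocus {R : Type*} (A : Type*) [CommSemiring R] [CommSemiring A] [Algebra R A]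
    (f : R[X]) (n : ℕ) : SubMulAction (A ≃ₐ[R] A) A where
  carrier := {x | ¬∃ y : A, y ^ n = aeval x f}
  smul_mem' := by
    rintro σ x hx ⟨y, hy⟩
    rw [AlgEquiv.smul_def, aeval_algHom_apply] at hy
    exact hx ⟨σ.symm y, by rw [← map_pow, hy, AlgEquiv.symm_apply_apply]⟩

theorem two_pow_dvd_card_nonsquare_values_general {K L : Type*} [Field K] [Field L] [Algebra K L]
    [Finite L] (f : K[X]) {p a : ℕ} (hp : p.Prime) (hdvd : p ^ a ∣ Module.finrank K L) :
    p ^ a ∣ Nat.card {x : L // ¬∃ y : L, y ^ p = aeval x f} := by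
  rw [← IsGalois.card_aut_eq_finrank] at hdvd
  refine pow_dvd_natCard_of_forall_orderOf_eq_prime (X := emptyFiberLocus L f p) hp hdvd ?_
  rintro σ hσ ⟨x, hx⟩ hfix
  have hσx : σ x = x := congrArg Subtype.val hfix
  have hσfx : σ (aeval x f) = aeval x f := by rw [← aeval_algHom_apply, hσx]
  exact hx (exists_pow_eq_of_fixed_of_prime_dvd_orderOf hp hσ.symm.dvd hσfx)

theorem ne_zero_and_not_exists_pow_eq_iff {M : Type*} [MonoidWithZero M] {n : ℕ} (hn : n ≠ 0)
    {c : M} : (c ≠ 0 ∧ ¬∃ y : M, y ^ n = c) ↔ ¬∃ y : M, y ^ n = c :=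
  and_iff_right_of_imp fun h hc ↦ h ⟨0, by rw [zero_pow hn, hc]⟩

/-- Let `q` be an odd prime power, `K` a finite field with `q` elements, `f ∈ K[X]`,
`n = 2^a ⬝ m` with `m` odd, and `L/K` an extension of degree `n`. Then the number of
`x ∈ L` such that `f(x) ≠ 0` and `f(x)` is not a square in `L` is divisible by `2^a`. -/
theorem two_pow_dvd_card_nonsquare_values
    (q : ℕ) (hq : IsPrimePow q) (hqodd : Odd q)
    (K : Type*) [Field K] [Fintype K] (hK : Fintype.card K = q)
    (f : Polynomial K) (a m : ℕ) (hm : Odd m)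
    (L : Type*) [Field L] [Algebra K L] (hL : Module.finrank K L = 2 ^ a * m) :
    2 ^ a ∣
      Nat.card {x : L // Polynomial.aeval x f ≠ 0 ∧ ¬∃ y : L, y ^ 2 = Polynomial.aeval x f} := by
  have : FiniteDimensional K L :=
    .of_finrank_pos (hL ▸ Nat.mul_pos (Nat.two_pow_pos a) hm.pos)
  have : Finite L := Module.finite_of_finite K
  simpa only [ne_zero_and_not_exists_pow_eq_iff two_ne_zero] using
    two_pow_dvd_card_nonsquare_values_general f Nat.prime_two (hL ▸ dvd_mul_right _ _)
end
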